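/- arXiv:0905.2626 — 3 statements merged into one kernel-verified Lean document; each statement's English description precedes it below -/
import Mathlib

section
/- Let φ : ℝ × ℝ^d → ℝ be smooth and compactly supported. Then for every s ∈ ℝ and x ∈ ℝ^d, ∫_s^∞ ∫_{ℝ^d} p_{u−s}(z − x) · (∂_u φ(u, z) + Δ_z^{α/2} φ(u, z)) dz du = −φ(s, x), where Δ_z^{α/2} φ(u, z) = lim_{ε → 0⁺} ∫_{|y| > ε} (φ(u, z + y) − φ(u, z)) ν(y) dy is the fractional Laplacian acting in the space variable, and the iterated integral converges absolutely. -/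
open MeasureTheory Real Filter
open scoped RealInnerProductSpace Topology

section A
variable {d : ℕ}

local notation "E" => EuclideanSpace ℝ (Fin d)

lemma gauss_int {b : ℝ} (hb : 0 < b) : Integrable (fun v : E => rexp (-b * ‖v‖ ^ 2)) := by
  have h := GaussianFourier.integrable_cexp_neg_mul_sq_norm_add (b := (b : ℂ)) (V := E) (by simpa) 0 0
  have := h.re
  refine this.congr (ae_of_all _ fun v => ?_)
  simp only [zero_mul, add_zero]
  have : (-(b : ℂ) * (‖v‖ : ℂ) ^ 2) = ((-b * ‖v‖ ^ 2 : ℝ) : ℂ) := by push_cast; ring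
  rw [this, ← Complex.ofReal_exp]; exact Complex.ofReal_re _

lemma gauss_cos {b : ℝ} (hb : 0 < b) (w : E) :
    ∫ v : E, rexp (-b * ‖v‖ ^ 2) * Real.cos ⟪w, v⟫ =
      (π / b) ^ ((d : ℝ) / 2) * rexp (-(‖w‖ ^ 2 / (4 * b))) := by
  have h := GaussianFourier.integral_cexp_neg_mul_sq_norm_add (b := (b : ℂ)) (V := E) (by simpa)
    Complex.I w
  have hi := GaussianFourier.integrable_cexp_neg_mul_sq_norm_add (b := (b : ℂ)) (V := E) (by simpa)
    Complex.I w
  have h2 := congrArg Complex.re h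
  have h3 : ∀ v : E, (Complex.exp (-(b : ℂ) * (‖v‖ : ℂ) ^ 2 + Complex.I * (⟪w, v⟫ : ℝ))).re
      = rexp (-b * ‖v‖ ^ 2) * Real.cos ⟪w, v⟫ := by
    intro v
    rw [Complex.exp_re]
    have e1 : (-(b : ℂ) * (‖v‖ : ℂ) ^ 2 + Complex.I * (⟪w, v⟫ : ℝ))
      = ((-b * ‖v‖ ^ 2 : ℝ) : ℂ) + ((⟪w, v⟫ : ℝ) : ℂ) * Complex.I := by push_cast; ring
    rw [e1]
    simp only [Complex.add_re, Complex.ofReal_re, Complex.mul_I_re, Complex.ofReal_im, neg_zero, add_zero,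
      Complex.add_im, Complex.mul_I_im, zero_add]
  have h4 := integral_re hi
  simp only [RCLike.re_eq_complex_re] at h4
  rw [← h4] at h2
  simp_rw [h3] at h2
  rw [h2]
  have e2 : (((π : ℂ) / (b : ℂ)) ^ (((Module.finrank ℝ E : ℕ) : ℂ) / 2)
     * Complex.exp (Complex.I ^ 2 * (‖w‖ : ℂ) ^ 2 / (4 * (b : ℂ))))
     = (((π / b) ^ ((d : ℝ) / 2) * rexp (-(‖w‖ ^ 2 / (4 * b))) : ℝ) : ℂ) := by
    rw [Complex.ofReal_mul, Complex.ofReal_cpow (by positivity), Complex.ofReal_exp]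
    simp
    ring_nf
    simp
  rw [e2, Complex.ofReal_re]

lemma mul_cos_int {f : E → ℝ} (hf : Integrable f) (w : E) :
    Integrable (fun v : E => f v * Real.cos ⟪w, v⟫) := by
  refine hf.mul_bdd (c := 1) ?_ ?_
  · fun_prop
  · exact ae_of_all _ fun v => by simpa using Real.abs_cos_le_one _

/-- 1D symbol integral -/
lemma sym_int {β : ℝ} (h0 : 0 < β) (h1 : β < 1) {k : ℝ} (hk : 0 ≤ k) :
    IntegrableOn (fun r : ℝ => (1 - rexp (-(k * r))) * r ^ (-1 - β)) (Set.Ioi 0) := by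
  rw [← Set.Ioc_union_Ioi_eq_Ioi (zero_le_one' ℝ)]
  have hm : ∀ S : Set ℝ, AEStronglyMeasurable (fun r : ℝ => (1 - rexp (-(k * r))) * r ^ (-1 - β)) (volume.restrict S) := by
    intro S
    exact Measurable.aestronglyMeasurable (by fun_prop)
  refine IntegrableOn.union ?_ ?_
  · have : IntegrableOn (fun r : ℝ => k * r ^ (-β)) (Set.Ioc 0 1) := by
      have := (intervalIntegral.intervalIntegrable_rpow' (a := 0) (b := 1) (r := -β) (by linarith)).const_mul k
      rwa [intervalIntegrable_iff_integrableOn_Ioc_of_le zero_le_one] at this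
    refine Integrable.mono' this (hm _) ?_
    refine (ae_restrict_iff' measurableSet_Ioc).2 (ae_of_all _ fun r hr => ?_)
    have hr0 := hr.1
    have e1 := Real.add_one_le_exp (-(k * r))
    have e2 : rexp (-(k * r)) ≤ 1 := Real.exp_le_one_iff.2 (by nlinarith [mul_nonneg hk hr0.le])
    rw [Real.norm_eq_abs, abs_of_nonneg (mul_nonneg (by linarith) (by positivity))]
    have : r ^ (-β) = r * r ^ (-1 - β) := by
      rw [← Real.rpow_one_add' hr0.le (by linarith)]; ring_nf
    rw [this, ← mul_assoc]
    gcongr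
    linarith
  · refine Integrable.mono' (integrableOn_Ioi_rpow_of_lt (a := -1 - β) (by linarith) zero_lt_one) (hm _) ?_
    refine (ae_restrict_iff' measurableSet_Ioi).2 (ae_of_all _ fun r hr => ?_)
    have hr0 : 0 < r := lt_trans zero_lt_one hr
    have e2 : rexp (-(k * r)) ≤ 1 := Real.exp_le_one_iff.2 (by nlinarith [mul_nonneg hk hr0.le])
    have e3 := Real.exp_pos (-(k * r))
    rw [Real.norm_eq_abs, abs_of_nonneg (mul_nonneg (by linarith) (by positivity))]
    exact mul_le_of_le_one_left (by positivity) (by linarith)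

lemma sym_val {β : ℝ} (h0 : 0 < β) (h1 : β < 1) {k : ℝ} (hk : 0 ≤ k) :
    ∫ r in Set.Ioi (0 : ℝ), (1 - rexp (-(k * r))) * r ^ (-1 - β) = k ^ β * |Real.Gamma (-β)| := by
  rcases hk.eq_or_lt with rfl | hk
  · simp [Real.zero_rpow h0.ne']
  have hG : |Real.Gamma (-β)| = Real.Gamma (1 - β) / β := by
    have h := Real.Gamma_add_one (s := -β) (by linarith)
    have hp := Real.Gamma_pos_of_pos (s := 1 - β) (by linarith)
    have : Real.Gamma (1 - β) = - β * Real.Gamma (-β) := by rw [← h]; ring_nf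
    have h2 : Real.Gamma (-β) = - (Real.Gamma (1 - β) / β) := by rw [this]; field_simp
    rw [h2, abs_neg, abs_of_pos (by positivity)]
  have hint2 : IntegrableOn (fun r : ℝ => r ^ ((1 - β) - 1) * rexp (-(k * r))) (Set.Ioi 0) := by
    have := integrableOn_rpow_mul_exp_neg_mul_rpow (p := 1) (s := -β) (b := k) (by linarith) (by norm_num) hk
    refine this.congr_fun (fun r hr => ?_) measurableSet_Ioi
    simp
  have hv := Real.integral_rpow_mul_exp_neg_mul_Ioi (a := 1 - β) (r := k) (by linarith) hk
  have hint1 := sym_int h0 h1 hk.le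
  -- antiderivative
  have key := integral_Ioi_of_hasDerivAt_of_tendsto (a := 0) (m := 0)
    (f := fun r : ℝ => -((1 - rexp (-(k * r))) * r ^ (-β)) / β)
    (f' := fun r : ℝ => (1 - rexp (-(k * r))) * r ^ (-1 - β) - (k / β) * (r ^ ((1 - β) - 1) * rexp (-(k * r))))
    ?_ ?_ (hint1.sub (hint2.const_mul _)) ?_
  · rw [integral_sub hint1 (hint2.const_mul _), integral_const_mul, hv] at key
    simp at key
    rw [hG]
    have : k ^ β = k * (k⁻¹) ^ (1 - β) := by
      rw [Real.inv_rpow hk.le, ← Real.rpow_neg hk.le, ← Real.rpow_one_add' hk.le (by linarith)]; ring_nf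
    rw [this]
    have : k / β * (k⁻¹ ^ (1 - β) * Gamma (1 - β)) = k * k⁻¹ ^ (1 - β) * (Gamma (1 - β) / β) := by ring
    linarith
  · -- continuity at 0
    have : Tendsto (fun r : ℝ => k * r ^ (1 - β) / β) (𝓝[≥] 0) (𝓝 0) := by
      have hc : ContinuousAt (fun r : ℝ => k * r ^ (1 - β) / β) 0 := by
        have := Real.continuousAt_rpow_const 0 (1 - β) (Or.inr (by linarith))
        fun_prop
      have := hc.tendsto
      rw [Real.zero_rpow (by linarith)] at this
      simp at this
      exact this.mono_left nhdsWithin_le_nhds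
    unfold ContinuousWithinAt
    simp only [mul_zero, neg_zero, Real.exp_zero, sub_self, zero_mul, zero_div]
    refine squeeze_zero_norm' ?_ this
    filter_upwards [self_mem_nhdsWithin] with r hr
    have hr0 : 0 ≤ r := hr
    rcases hr0.eq_or_lt with rfl | hr0
    · simp [Real.zero_rpow (x := 1 - β) (by linarith)]
    have e1 := Real.add_one_le_exp (-(k * r))
    have e2 : rexp (-(k * r)) ≤ 1 := Real.exp_le_one_iff.2 (by nlinarith [mul_nonneg hk.le hr0.le])
    rw [Real.norm_eq_abs, abs_div, abs_neg, abs_of_nonneg (mul_nonneg (by linarith) (by positivity)), abs_of_pos h0]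
    have : r ^ (1 - β) = r * r ^ (-β) := by
      rw [← Real.rpow_one_add' hr0.le (by linarith)]; ring_nf
    rw [this, ← mul_assoc]
    gcongr
    linarith
  · intro r hr
    have hr0 : (0 : ℝ) < r := hr
    have d1 : HasDerivAt (fun r : ℝ => 1 - rexp (-(k * r))) (k * rexp (-(k * r))) r := by
      have := (((hasDerivAt_id r).const_mul k).neg.exp).const_sub 1
      convert! this using 1
      simp; ring
    have d2 := Real.hasDerivAt_rpow_const (x := r) (p := -β) (Or.inl hr0.ne')
    have := (d1.mul d2).neg.div_const β
    convert! this using 1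
    rw [show -β - 1 = -1 - β by ring, show 1 - β - 1 = -β by ring]
    field_simp
    ring
  · have : Tendsto (fun r : ℝ => r ^ (-β) / β) atTop (𝓝 0) := by
      simpa using (tendsto_rpow_neg_atTop h0).div_const β
    refine squeeze_zero_norm' ?_ this
    filter_upwards [eventually_gt_atTop 0] with r hr0
    have e2 : rexp (-(k * r)) ≤ 1 := Real.exp_le_one_iff.2 (by nlinarith [mul_nonneg hk.le hr0.le])
    have e3 := Real.exp_pos (-(k * r))
    rw [Real.norm_eq_abs, abs_div, abs_neg, abs_of_nonneg (mul_nonneg (by linarith) (by positivity)), abs_of_pos h0]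
    gcongr
    exact mul_le_of_le_one_left (by positivity) (by linarith)

lemma sym_inv {β : ℝ} (h0 : 0 < β) (h1 : β < 1) {k : ℝ} (hk : 0 ≤ k) :
    IntegrableOn (fun r : ℝ => (1 - rexp (-(k / r))) * r ^ (β - 1)) (Set.Ioi 0) ∧
    ∫ r in Set.Ioi (0 : ℝ), (1 - rexp (-(k / r))) * r ^ (β - 1) = k ^ β * |Real.Gamma (-β)| := by
  have e : Set.EqOn (fun x : ℝ => (|(-1 : ℝ)| * x ^ ((-1 : ℝ) - 1)) • ((1 - rexp (-(k * (x ^ (-1 : ℝ))))) * (x ^ (-1 : ℝ)) ^ (-1 - β)))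
     (fun r : ℝ => (1 - rexp (-(k / r))) * r ^ (β - 1)) (Set.Ioi 0) := by
    intro x hx
    have hx : 0 < x := hx
    simp only [smul_eq_mul]
    rw [← Real.rpow_mul hx.le, Real.rpow_neg_one, ← div_eq_mul_inv]
    have : x ^ (β - 1) = x ^ ((-1 : ℝ) - 1) * x ^ (-1 * (-1 - β)) := by
      rw [← Real.rpow_add hx]; ring_nf
    rw [this]; simp; ring
  constructor
  · have := (integrableOn_Ioi_comp_rpow_iff (fun r : ℝ => (1 - rexp (-(k * r))) * r ^ (-1 - β)) (p := -1) (by norm_num)).2 (sym_int h0 h1 hk)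
    exact this.congr_fun e measurableSet_Ioi
  · rw [← sym_val h0 h1 hk, ← integral_comp_rpow_Ioi (fun r : ℝ => (1 - rexp (-(k * r))) * r ^ (-1 - β)) (p := -1) (by norm_num)]
    exact (setIntegral_congr_fun measurableSet_Ioi e).symm

end A

section B
variable {d : ℕ}

local notation "E" => EuclideanSpace ℝ (Fin d)

lemma symbol_aux {α : ℝ} (hα0 : 0 < α) (hα2 : α < 2) (ξ : E) :
    ∫ y : E, (1 - Real.cos ⟪ξ, y⟫) * (Real.Gamma (((d : ℝ) + α) / 2) * ‖y‖ ^ (-((d : ℝ) + α)))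
      = π ^ ((d : ℝ) / 2) * ((‖ξ‖ ^ 2 / 4) ^ (α / 2) * |Real.Gamma (-α / 2)|) := by
  set a : ℝ := ((d : ℝ) + α) / 2 with ha
  have hapos : 0 < a := by positivity
  let F : ℝ → E → ℝ := fun ρ y => ρ ^ (a - 1) * (rexp (-ρ * ‖y‖ ^ 2) * (1 - Real.cos ⟪ξ, y⟫))
  have hFn : ∀ ρ ∈ Set.Ioi (0 : ℝ), ∀ y, 0 ≤ F ρ y := by
    intro ρ hρ y
    have h1 := Real.cos_le_one ⟪ξ, y⟫
    have h2 : (0 : ℝ) < ρ := hρ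
    exact mul_nonneg (by positivity) (mul_nonneg (Real.exp_pos _).le (by linarith))
  have hFi : ∀ ρ ∈ Set.Ioi (0 : ℝ), Integrable (F ρ) := by
    intro ρ hρ
    have := ((gauss_int (d := d) hρ).sub (mul_cos_int (gauss_int hρ) ξ)).const_mul (ρ ^ (a - 1))
    refine this.congr (ae_of_all _ fun y => ?_)
    simp [F]; left; ring
  have hFv : ∀ ρ ∈ Set.Ioi (0 : ℝ), ∫ y, F ρ y =
      π ^ ((d : ℝ) / 2) * ((1 - rexp (-((‖ξ‖ ^ 2 / 4) / ρ))) * ρ ^ (α / 2 - 1)) := by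
    intro ρ hρ
    have hρ0 : (0 : ℝ) < ρ := hρ
    simp only [F]
    rw [integral_const_mul]
    have e : ∀ y : E, rexp (-ρ * ‖y‖ ^ 2) * (1 - Real.cos ⟪ξ, y⟫) =
        rexp (-ρ * ‖y‖ ^ 2) * Real.cos ⟪(0 : E), y⟫ - rexp (-ρ * ‖y‖ ^ 2) * Real.cos ⟪ξ, y⟫ := by
      intro y; simp; ring
    simp_rw [e]
    rw [integral_sub (mul_cos_int (gauss_int hρ) 0) (mul_cos_int (gauss_int hρ) ξ), gauss_cos hρ, gauss_cos hρ]
    rw [Real.div_rpow Real.pi_pos.le hρ0.le]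
    have : ρ ^ (α / 2 - 1) = ρ ^ (a - 1) / ρ ^ ((d : ℝ) / 2) := by
      rw [← Real.rpow_sub hρ0]; congr 1; rw [ha]; ring
    rw [this]
    have e3 : ‖ξ‖ ^ 2 / (4 * ρ) = ‖ξ‖ ^ 2 / 4 / ρ := by field_simp
    simp [e3]
    ring
  have hsym := sym_inv (β := α / 2) (by linarith) (by linarith) (k := ‖ξ‖ ^ 2 / 4) (by positivity)
  have hint : Integrable (Function.uncurry F) ((volume.restrict (Set.Ioi (0 : ℝ))).prod volume) := by
    rw [integrable_prod_iff]
    · constructor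
      · exact (ae_restrict_iff' measurableSet_Ioi).2 (ae_of_all _ fun ρ hρ => hFi ρ hρ)
      · have : IntegrableOn (fun ρ : ℝ => π ^ ((d : ℝ) / 2) * ((1 - rexp (-((‖ξ‖ ^ 2 / 4) / ρ))) * ρ ^ (α / 2 - 1))) (Set.Ioi 0) :=
          hsym.1.const_mul _
        refine this.congr_fun (fun ρ hρ => ?_) measurableSet_Ioi
        dsimp only
        rw [← hFv ρ hρ]
        refine integral_congr_ae (ae_of_all _ fun y => ?_)
        simp only [Function.uncurry, Real.norm_eq_abs]
        exact (abs_of_nonneg (hFn ρ hρ y)).symm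
    · refine Measurable.aestronglyMeasurable ?_
      simp only [F, Function.uncurry_def]
      fun_prop
  have hsw := integral_integral_swap hint
  rw [setIntegral_congr_fun measurableSet_Ioi hFv, integral_const_mul, hsym.2] at hsw
  rw [show -α / 2 = -(α / 2) by ring, hsw]
  refine integral_congr_ae (ae_of_all _ fun y => ?_)
  simp only [F]
  by_cases hy : y = 0
  · simp [hy]
  have hy' : 0 < ‖y‖ := norm_pos_iff.2 hy
  have hg := Real.integral_rpow_mul_exp_neg_mul_Ioi (a := a) (r := ‖y‖ ^ 2) hapos (by positivity)
  have e : ∀ ρ : ℝ, ρ ^ (a - 1) * (rexp (-ρ * ‖y‖ ^ 2) * (1 - Real.cos ⟪ξ, y⟫)) =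
    (1 - Real.cos ⟪ξ, y⟫) * (ρ ^ (a - 1) * rexp (-(‖y‖ ^ 2 * ρ))) := by
    intro ρ; rw [show -ρ * ‖y‖ ^ 2 = -(‖y‖ ^ 2 * ρ) by ring]; ring
  simp_rw [e]
  rw [integral_const_mul, hg]
  have : (1 / ‖y‖ ^ 2) ^ a = ‖y‖ ^ (-((d : ℝ) + α)) := by
    rw [one_div, Real.inv_rpow (by positivity), ← Real.rpow_neg (by positivity), ← Real.rpow_natCast,
      ← Real.rpow_mul hy'.le]
    congr 1; rw [ha]; push_cast; ring
  rw [this]; ring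

lemma symbol_d {α : ℝ} (hα0 : 0 < α) (hα2 : α < 2) (ξ : E) :
    ∫ y : E, (1 - Real.cos ⟪ξ, y⟫) * ((2 : ℝ) ^ α * Real.Gamma (((d : ℝ) + α) / 2) /
        (Real.pi ^ ((d : ℝ) / 2) * |Real.Gamma (-α / 2)|) * ‖y‖ ^ (-((d : ℝ) + α)))
      = ‖ξ‖ ^ α := by
  have h := symbol_aux hα0 hα2 ξ
  have e : ∀ y : E, (1 - Real.cos ⟪ξ, y⟫) * ((2 : ℝ) ^ α * Real.Gamma (((d : ℝ) + α) / 2) /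
        (Real.pi ^ ((d : ℝ) / 2) * |Real.Gamma (-α / 2)|) * ‖y‖ ^ (-((d : ℝ) + α)))
     = ((2 : ℝ) ^ α / (Real.pi ^ ((d : ℝ) / 2) * |Real.Gamma (-α / 2)|)) *
      ((1 - Real.cos ⟪ξ, y⟫) * (Real.Gamma (((d : ℝ) + α) / 2) * ‖y‖ ^ (-((d : ℝ) + α)))) := by
    intro y; ring
  simp_rw [e]
  rw [integral_const_mul, h]
  have hG : |Real.Gamma (-α / 2)| ≠ 0 := by
    rw [abs_ne_zero]
    have h := Real.Gamma_add_one (s := -α / 2) (by linarith)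
    have hp := Real.Gamma_pos_of_pos (s := -α / 2 + 1) (by linarith)
    intro h0
    rw [h, h0] at hp
    simp at hp
  have h4 : (‖ξ‖ ^ 2 / 4) ^ (α / 2) = ‖ξ‖ ^ α / 2 ^ α := by
    rw [show ‖ξ‖ ^ 2 / 4 = (‖ξ‖ / 2) ^ (2 : ℝ) by rw [Real.rpow_two]; ring, ← Real.rpow_mul (by positivity),
      ← Real.div_rpow (by positivity) (by positivity)]
    congr 1; ring
  rw [h4]
  have hpi : π ^ ((d : ℝ) / 2) ≠ 0 := by positivity
  have h2 : (2 : ℝ) ^ α ≠ 0 := by positivity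
  generalize |Real.Gamma (-α / 2)| = G at hG ⊢
  field_simp

lemma nu_int (hd : 1 ≤ d) {α : ℝ} (hα0 : 0 < α) (hα2 : α < 2) :
    Integrable (fun y : E => min 1 (‖y‖ ^ 2) * ‖y‖ ^ (-((d : ℝ) + α))) := by
  have : Nonempty (Fin d) := ⟨⟨0, hd⟩⟩
  have : Nontrivial E := inferInstance
  rw [integrable_fun_norm_addHaar volume (f := fun r : ℝ => min 1 (r ^ 2) * r ^ (-((d : ℝ) + α)))]
  simp only [finrank_euclideanSpace, Fintype.card_fin, smul_eq_mul]
  have hpow : ∀ r : ℝ, 0 < r → r ^ (d - 1) = r ^ ((d : ℝ) - 1) := by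
    intro r hr
    rw [← Real.rpow_natCast]; congr 1; push_cast [hd]; ring
  rw [← Set.Ioc_union_Ioi_eq_Ioi (zero_le_one' ℝ)]
  refine IntegrableOn.union ?_ ?_
  · have := (intervalIntegral.intervalIntegrable_rpow' (a := 0) (b := 1) (r := 1 - α) (by linarith))
    rw [intervalIntegrable_iff_integrableOn_Ioc_of_le zero_le_one] at this
    refine this.congr_fun (fun r hr => ?_) measurableSet_Ioc
    have hr0 := hr.1
    dsimp only
    rw [hpow r hr0, min_eq_right (by nlinarith [hr.2]), ← Real.rpow_natCast r 2, ← Real.rpow_add hr0, ← Real.rpow_add hr0]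
    congr 1; push_cast; ring
  · refine (integrableOn_Ioi_rpow_of_lt (a := -1 - α) (by linarith) zero_lt_one).congr_fun (fun r hr => ?_) measurableSet_Ioi
    have hr1 : 1 < r := hr
    have hr0 : 0 < r := lt_trans zero_lt_one hr
    dsimp only
    rw [hpow r hr0, min_eq_left (by nlinarith), one_mul, ← Real.rpow_add hr0]
    congr 1; ring

lemma exp_int (hd : 1 ≤ d) {α : ℝ} (hα0 : 0 < α) {t : ℝ} (ht : 0 < t) :
    Integrable (fun ξ : E => rexp (-(t * ‖ξ‖ ^ α))) := by
  have : Nonempty (Fin d) := ⟨⟨0, hd⟩⟩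
  have : Nontrivial E := inferInstance
  rw [integrable_fun_norm_addHaar volume (f := fun r : ℝ => rexp (-(t * r ^ α)))]
  have := integrableOn_rpow_mul_exp_neg_mul_rpow (p := α) (s := ((d - 1 : ℕ) : ℝ)) (b := t) (lt_of_lt_of_le (by norm_num) (Nat.cast_nonneg _)) hα0 ht
  refine this.congr_fun (fun r hr => ?_) measurableSet_Ioi
  simp

end B

section C
variable {d : ℕ}

local notation "E" => EuclideanSpace ℝ (Fin d)

def PosCls (m : EuclideanSpace ℝ (Fin d) → ℝ) : Prop :=
  Measurable m ∧ (∃ B : ℝ, ∀ ξ, |m ξ| ≤ B) ∧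
    ∀ σ : ℝ, 0 < σ → ∀ x : EuclideanSpace ℝ (Fin d), 0 ≤ ∫ ξ, m ξ * rexp (-σ * ‖ξ‖ ^ 2) * Real.cos ⟪x, ξ⟫

lemma bdd_gauss_int {m : E → ℝ} (hm : Measurable m) {B : ℝ} (hB : ∀ ξ, |m ξ| ≤ B) {σ : ℝ} (hσ : 0 < σ) (x : E) :
    Integrable (fun ξ => m ξ * rexp (-σ * ‖ξ‖ ^ 2) * Real.cos ⟪x, ξ⟫) := by
  refine mul_cos_int ?_ x
  exact (gauss_int hσ).bdd_mul hm.aestronglyMeasurable (ae_of_all _ fun ξ => by simpa using hB ξ)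

lemma PosCls.const {c : ℝ} (hc : 0 ≤ c) : PosCls (fun _ : E => c) := by
  refine ⟨measurable_const, ⟨|c|, fun _ => le_rfl⟩, fun σ hσ x => ?_⟩
  simp_rw [mul_assoc]
  rw [integral_const_mul, gauss_cos hσ]
  positivity

lemma PosCls.add {m n : E → ℝ} (hm : PosCls m) (hn : PosCls n) : PosCls (fun ξ => m ξ + n ξ) := by
  obtain ⟨hm1, ⟨B, hB⟩, hm3⟩ := hm
  obtain ⟨hn1, ⟨C, hC⟩, hn3⟩ := hn
  refine ⟨hm1.add hn1, ⟨B + C, fun ξ => (abs_add_le _ _).trans (add_le_add (hB ξ) (hC ξ))⟩, fun σ hσ x => ?_⟩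
  have := add_nonneg (hm3 σ hσ x) (hn3 σ hσ x)
  rw [← integral_add (bdd_gauss_int hm1 hB hσ x) (bdd_gauss_int hn1 hC hσ x)] at this
  refine this.trans_eq (integral_congr_ae (ae_of_all _ fun ξ => ?_))
  dsimp only; ring

lemma PosCls.const_mul {m : E → ℝ} (hm : PosCls m) {c : ℝ} (hc : 0 ≤ c) : PosCls (fun ξ => c * m ξ) := by
  obtain ⟨hm1, ⟨B, hB⟩, hm3⟩ := hm
  refine ⟨hm1.const_mul c, ⟨c * B, fun ξ => ?_⟩, fun σ hσ x => ?_⟩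
  · rw [abs_mul, abs_of_nonneg hc]; exact mul_le_mul_of_nonneg_left (hB ξ) hc
  · simp_rw [mul_assoc]
    rw [integral_const_mul]
    have := hm3 σ hσ x
    simp_rw [mul_assoc] at this
    positivity

lemma PosCls.lim {m : ℕ → E → ℝ} (hm : ∀ n, PosCls (m n)) {B : ℝ} (hB : ∀ n ξ, |m n ξ| ≤ B)
    {f : E → ℝ} (hf : ∀ ξ, Tendsto (fun n => m n ξ) atTop (𝓝 (f ξ))) : PosCls f := by
  have hfm : Measurable f := measurable_of_tendsto_metrizable (fun n => (hm n).1) (tendsto_pi_nhds.2 hf)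
  refine ⟨hfm, ⟨B, fun ξ => le_of_tendsto (hf ξ).abs (Eventually.of_forall fun n => hB n ξ)⟩, fun σ hσ x => ?_⟩
  have : Tendsto (fun n => ∫ ξ, m n ξ * rexp (-σ * ‖ξ‖ ^ 2) * Real.cos ⟪x, ξ⟫) atTop
      (𝓝 (∫ ξ, f ξ * rexp (-σ * ‖ξ‖ ^ 2) * Real.cos ⟪x, ξ⟫)) := by
    refine tendsto_integral_of_dominated_convergence (fun ξ => B * rexp (-σ * ‖ξ‖ ^ 2)) ?_ ?_ ?_ ?_
    · intro n
      exact (bdd_gauss_int (hm n).1 (hB n) hσ x).aestronglyMeasurable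
    · exact (gauss_int hσ).const_mul B
    · intro n
      refine ae_of_all _ fun ξ => ?_
      rw [norm_mul, norm_mul, Real.norm_eq_abs, Real.norm_eq_abs, Real.norm_eq_abs, abs_of_pos (Real.exp_pos _)]
      have h1 := Real.abs_cos_le_one ⟪x, ξ⟫
      have h2 := hB n ξ
      have h3 := Real.exp_pos (-σ * ‖ξ‖ ^ 2)
      have h0 := (abs_nonneg _).trans h2
      calc _ ≤ B * rexp (-σ * ‖ξ‖ ^ 2) * 1 := by gcongr
        _ = _ := mul_one _
    · exact ae_of_all _ fun ξ => ((hf ξ).mul_const _).mul_const _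
  exact ge_of_tendsto this (Eventually.of_forall fun n => (hm n).2.2 σ hσ x)

noncomputable def subM (δ β : ℝ) (ξ : EuclideanSpace ℝ (Fin d)) : ℝ :=
  ∫ r in Set.Ioi δ, rexp (-(‖ξ‖ ^ 2 * r)) * r ^ (-1 - β)

lemma subM_int {δ β : ℝ} (hδ : 0 < δ) (hβ : 0 < β) (ξ : E) :
    IntegrableOn (fun r : ℝ => rexp (-(‖ξ‖ ^ 2 * r)) * r ^ (-1 - β)) (Set.Ioi δ) := by
  refine Integrable.mono' (integrableOn_Ioi_rpow_of_lt (a := -1 - β) (by linarith) hδ) ?_ ?_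
  · exact Measurable.aestronglyMeasurable (by fun_prop)
  · refine (ae_restrict_iff' measurableSet_Ioi).2 (ae_of_all _ fun r hr => ?_)
    have hr0 : 0 < r := lt_trans hδ hr
    rw [Real.norm_eq_abs, abs_of_nonneg (by positivity)]
    exact mul_le_of_le_one_left (by positivity) (Real.exp_le_one_iff.2 (by nlinarith [mul_nonneg (sq_nonneg ‖ξ‖) hr0.le]))

lemma subM_nonneg {δ β : ℝ} (hδ : 0 < δ) (ξ : E) : 0 ≤ subM δ β ξ := by
  refine setIntegral_nonneg measurableSet_Ioi fun r hr => ?_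
  have hr0 : 0 < r := lt_trans hδ hr
  positivity

lemma subM_le {δ β : ℝ} (hδ : 0 < δ) (hβ : 0 < β) (ξ : E) :
    subM δ β ξ ≤ ∫ r in Set.Ioi δ, r ^ (-1 - β) := by
  refine setIntegral_mono_on (subM_int hδ hβ ξ) (integrableOn_Ioi_rpow_of_lt (a := -1 - β) (by linarith) hδ) measurableSet_Ioi fun r hr => ?_
  have hr0 : 0 < r := lt_trans hδ hr
  exact mul_le_of_le_one_left (by positivity) (Real.exp_le_one_iff.2 (by nlinarith [mul_nonneg (sq_nonneg ‖ξ‖) hr0.le]))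

lemma PosCls.mul_subM {m : E → ℝ} (hm : PosCls m) {δ β : ℝ} (hδ : 0 < δ) (hβ : 0 < β) :
    PosCls (fun ξ => m ξ * subM δ β ξ) := by
  obtain ⟨hm1, ⟨B, hB⟩, hm3⟩ := hm
  have hmeas : Measurable (subM δ β : E → ℝ) := by
    unfold subM
    refine (StronglyMeasurable.integral_prod_right (f := fun (ξ : E) (r : ℝ) => rexp (-(‖ξ‖ ^ 2 * r)) * r ^ (-1 - β)) ?_).measurable
    refine Measurable.stronglyMeasurable ?_
    fun_prop
  refine ⟨hm1.mul hmeas, ⟨B * ∫ r in Set.Ioi δ, r ^ (-1 - β), fun ξ => ?_⟩, fun σ hσ x => ?_⟩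
  · rw [abs_mul, abs_of_nonneg (subM_nonneg hδ ξ)]
    exact mul_le_mul (hB ξ) (subM_le hδ hβ ξ) (subM_nonneg hδ ξ) ((abs_nonneg _).trans (hB ξ))
  · let F : E → ℝ → ℝ := fun ξ r => (m ξ * rexp (-σ * ‖ξ‖ ^ 2) * Real.cos ⟪x, ξ⟫) * (rexp (-(‖ξ‖ ^ 2 * r)) * r ^ (-1 - β))
    have hint : Integrable (Function.uncurry F) (volume.prod (volume.restrict (Set.Ioi δ))) := by
      have h1 := (bdd_gauss_int hm1 hB hσ x).mul_prod (integrableOn_Ioi_rpow_of_lt (a := -1 - β) (by linarith) hδ)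
      have h2 := h1.bdd_mul (f := fun p : E × ℝ => rexp (-(‖p.1‖ ^ 2 * |p.2|))) (c := 1)
        (Continuous.aestronglyMeasurable (by fun_prop)) (ae_of_all _ fun p => by
          rw [Real.norm_eq_abs, abs_of_pos (Real.exp_pos _)]
          exact Real.exp_le_one_iff.2 (by nlinarith [mul_nonneg (sq_nonneg ‖p.1‖) (abs_nonneg p.2)]))
      refine h2.congr ?_
      have : ∀ᵐ p : E × ℝ ∂(volume.prod (volume.restrict (Set.Ioi δ))), p.2 ∈ Set.Ioi δ := by
        have := ae_restrict_mem (μ := (volume : Measure ℝ)) (measurableSet_Ioi (a := δ))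
        exact Measure.quasiMeasurePreserving_snd.ae this
      filter_upwards [this] with p hp
      have : 0 < p.2 := lt_trans hδ hp
      simp only [F, Function.uncurry]
      rw [abs_of_pos this]; ring
    have hsw := integral_integral_swap hint
    have e1 : ∀ ξ, ∫ r in Set.Ioi δ, F ξ r = m ξ * subM δ β ξ * rexp (-σ * ‖ξ‖ ^ 2) * Real.cos ⟪x, ξ⟫ := by
      intro ξ
      simp only [F]
      rw [integral_const_mul, subM]; ring
    simp_rw [e1] at hsw
    rw [hsw]
    refine setIntegral_nonneg measurableSet_Ioi fun r hr => ?_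
    have hr0 : 0 < r := lt_trans hδ hr
    have e2 : ∀ ξ, F ξ r = r ^ (-1 - β) * (m ξ * rexp (-(σ + r) * ‖ξ‖ ^ 2) * Real.cos ⟪x, ξ⟫) := by
      intro ξ
      simp only [F]
      rw [show -(σ + r) * ‖ξ‖ ^ 2 = -σ * ‖ξ‖ ^ 2 + -(‖ξ‖ ^ 2 * r) by ring, Real.exp_add]; ring
    simp_rw [e2]
    rw [integral_const_mul]
    exact mul_nonneg (by positivity) (hm3 _ (by linarith) x)

lemma PosCls.exp_subM {δ β c : ℝ} (hδ : 0 < δ) (hβ : 0 < β) (hc : 0 ≤ c) :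
    PosCls (fun ξ : E => rexp (c * subM δ β ξ)) := by
  have hpow : ∀ n : ℕ, PosCls (fun ξ : E => (c * subM δ β ξ) ^ n) := by
    intro n
    induction n with
    | zero => simpa using PosCls.const (d := d) zero_le_one
    | succ n ih =>
      have := (ih.mul_subM hδ hβ).const_mul hc
      refine (funext fun ξ => ?_ : (fun ξ : E => (c * subM δ β ξ) ^ (n + 1)) = _) ▸ this
      ring
  have hsum : ∀ N : ℕ, PosCls (fun ξ : E => ∑ n ∈ Finset.range N, (c * subM δ β ξ) ^ n / (n.factorial : ℝ)) := by
    intro N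
    induction N with
    | zero => simpa using PosCls.const (d := d) le_rfl
    | succ N ih =>
      simp_rw [Finset.sum_range_succ]
      refine ih.add ?_
      have := (hpow N).const_mul (c := (N.factorial : ℝ)⁻¹) (by positivity)
      refine (funext fun ξ => ?_ : (fun ξ : E => (c * subM δ β ξ) ^ N / (N.factorial : ℝ)) = _) ▸ this
      ring
  refine PosCls.lim hsum (B := rexp (c * ∫ r in Set.Ioi δ, r ^ (-1 - β))) ?_ ?_
  · intro n ξ
    have h0 := mul_nonneg hc (subM_nonneg (β := β) hδ ξ)
    rw [abs_of_nonneg (Finset.sum_nonneg fun i _ => by positivity)]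
    refine (Real.sum_le_exp_of_nonneg h0 n).trans ?_
    exact Real.exp_le_exp.2 (mul_le_mul_of_nonneg_left (subM_le hδ hβ ξ) hc)
  · intro ξ
    have := (NormedSpace.expSeries_div_hasSum_exp (𝔸 := ℝ) (c * subM δ β ξ)).tendsto_sum_nat
    rwa [← Real.exp_eq_exp_ℝ] at this

lemma PosCls.stable {α t : ℝ} (hα0 : 0 < α) (hα2 : α < 2) (ht : 0 < t) :
    PosCls (fun ξ : E => rexp (-(t * ‖ξ‖ ^ α))) := by
  set β := α / 2 with hβd
  have hβ : 0 < β := by positivity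
  have hβ1 : β < 1 := by linarith
  set c : ℝ := t * |Real.Gamma (-β)|⁻¹ with hc
  have hc0 : 0 ≤ c := by positivity
  let δ : ℕ → ℝ := fun n => 1 / ((n : ℝ) + 1)
  have hδ : ∀ n, 0 < δ n := fun n => by positivity
  let ψ : ℕ → E → ℝ := fun n ξ => ∫ r in Set.Ioi (δ n), (1 - rexp (-(‖ξ‖ ^ 2 * r))) * r ^ (-1 - β)
  have hψ : ∀ n ξ, ψ n ξ = (∫ r in Set.Ioi (δ n), r ^ (-1 - β)) - subM (δ n) β ξ := by
    intro n ξ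
    simp only [ψ, subM]
    rw [← integral_sub (integrableOn_Ioi_rpow_of_lt (a := -1 - β) (by linarith) (hδ n)) (subM_int (hδ n) hβ ξ)]
    refine integral_congr_ae (ae_of_all _ fun r => ?_)
    dsimp only; ring
  have hψ0 : ∀ n ξ, 0 ≤ ψ n ξ := by
    intro n ξ; rw [hψ]; linarith [subM_le (hδ n) hβ ξ]
  refine PosCls.lim (m := fun n ξ => rexp (-(c * ψ n ξ))) (B := 1) ?_ ?_ ?_
  · intro n
    have := (PosCls.exp_subM (d := d) (hδ n) hβ hc0).const_mul (Real.exp_pos (-(c * ∫ r in Set.Ioi (δ n), r ^ (-1 - β)))).le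
    refine (funext fun ξ => ?_ : (fun ξ : E => rexp (-(c * ψ n ξ))) = _) ▸ this
    rw [← Real.exp_add, hψ]; ring_nf
  · intro n ξ
    rw [abs_of_pos (Real.exp_pos _)]
    exact Real.exp_le_one_iff.2 (by nlinarith [mul_nonneg hc0 (hψ0 n ξ)])
  · intro ξ
    have hU : (⋃ n, Set.Ioi (δ n)) = Set.Ioi 0 := by
      ext r
      simp only [Set.mem_iUnion, Set.mem_Ioi]
      constructor
      · rintro ⟨n, hn⟩; exact (hδ n).trans hn
      · intro hr; exact exists_nat_one_div_lt hr
    have h1 : Tendsto (fun n => ψ n ξ) atTop (𝓝 (∫ r in ⋃ n, Set.Ioi (δ n), (1 - rexp (-(‖ξ‖ ^ 2 * r))) * r ^ (-1 - β))) := by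
      refine tendsto_setIntegral_of_monotone (fun n => measurableSet_Ioi) ?_ ?_
      · intro a b hab
        refine Set.Ioi_subset_Ioi ?_
        simp only [δ]
        gcongr
      · rw [hU]; exact sym_int hβ hβ1 (by positivity)
    rw [hU, sym_val hβ hβ1 (by positivity)] at h1
    have hG : |Real.Gamma (-β)| ≠ 0 := by
      rw [abs_ne_zero]
      have h := Real.Gamma_add_one (s := -β) (by linarith)
      have hp := Real.Gamma_pos_of_pos (s := -β + 1) (by linarith)
      intro h0
      rw [h, h0] at hp
      simp at hp
    have e : t * ‖ξ‖ ^ α = c * ((‖ξ‖ ^ 2) ^ β * |Real.Gamma (-β)|) := by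
      rw [← Real.rpow_natCast, ← Real.rpow_mul (norm_nonneg _)]
      rw [show ((2 : ℕ) : ℝ) * β = α by rw [hβd]; push_cast; ring, hc]
      field_simp
    rw [e]
    exact (Real.continuous_exp.tendsto _).comp (h1.const_mul c).neg

/-- unnormalised kernel -/
noncomputable def qk (α t : ℝ) (x : EuclideanSpace ℝ (Fin d)) : ℝ :=
  ∫ ξ : EuclideanSpace ℝ (Fin d), rexp (-(t * ‖ξ‖ ^ α)) * Real.cos ⟪x, ξ⟫

lemma qk_nonneg (hd : 1 ≤ d) {α t : ℝ} (hα0 : 0 < α) (hα2 : α < 2) (ht : 0 < t) (x : E) : 0 ≤ qk α t x := by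
  have h := (PosCls.stable (d := d) hα0 hα2 ht).2.2
  have : Tendsto (fun n : ℕ => ∫ ξ : E, rexp (-(t * ‖ξ‖ ^ α)) * rexp (-(1 / ((n : ℝ) + 1)) * ‖ξ‖ ^ 2) * Real.cos ⟪x, ξ⟫) atTop
      (𝓝 (qk α t x)) := by
    refine tendsto_integral_of_dominated_convergence (fun ξ => rexp (-(t * ‖ξ‖ ^ α))) ?_ (exp_int hd hα0 ht) ?_ ?_
    · intro n
      refine Measurable.aestronglyMeasurable (by fun_prop)
    · intro n
      refine ae_of_all _ fun ξ => ?_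
      rw [norm_mul, norm_mul, Real.norm_eq_abs, Real.norm_eq_abs, Real.norm_eq_abs, abs_of_pos (Real.exp_pos _), abs_of_pos (Real.exp_pos _)]
      have h1 := Real.abs_cos_le_one ⟪x, ξ⟫
      have h2 : rexp (-(1 / ((n : ℝ) + 1)) * ‖ξ‖ ^ 2) ≤ 1 := Real.exp_le_one_iff.2 (by
        have : 0 ≤ (1 / ((n : ℝ) + 1)) * ‖ξ‖ ^ 2 := by positivity
        linarith)
      calc _ ≤ rexp (-(t * ‖ξ‖ ^ α)) * 1 * 1 := by gcongr
        _ = _ := by ring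
    · refine ae_of_all _ fun ξ => ?_
      have h0 : Tendsto (fun n : ℕ => rexp (-(1 / ((n : ℝ) + 1)) * ‖ξ‖ ^ 2)) atTop (𝓝 1) := by
        have := ((tendsto_one_div_add_atTop_nhds_zero_nat (𝕜 := ℝ)).neg.mul_const (‖ξ‖ ^ 2))
        have := (Real.continuous_exp.tendsto _).comp this
        simpa [Function.comp_def] using this
      have := (h0.const_mul (rexp (-(t * ‖ξ‖ ^ α)))).mul_const (Real.cos ⟪x, ξ⟫)
      simpa using this
  exact ge_of_tendsto this (Eventually.of_forall fun n => h _ (by positivity) x)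

lemma qk_meas (α : ℝ) : Measurable (fun p : ℝ × E => qk α p.1 p.2) := by
  unfold qk
  refine (StronglyMeasurable.integral_prod_right (f := fun (p : ℝ × E) (ξ : E) => rexp (-(p.1 * ‖ξ‖ ^ α)) * Real.cos ⟪p.2, ξ⟫) ?_).measurable
  refine Measurable.stronglyMeasurable ?_
  simp only [Function.uncurry_def]
  fun_prop

lemma qk_le (hd : 1 ≤ d) {α t : ℝ} (hα0 : 0 < α) (ht : 0 < t) (x : E) : |qk α t x| ≤ ∫ ξ : E, rexp (-(t * ‖ξ‖ ^ α)) := by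
  unfold qk
  rw [← Real.norm_eq_abs]
  refine norm_integral_le_of_norm_le (exp_int hd hα0 ht) (ae_of_all _ fun ξ => ?_)
  rw [norm_mul, Real.norm_eq_abs, Real.norm_eq_abs, abs_of_pos (Real.exp_pos _)]
  exact mul_le_of_le_one_right (Real.exp_pos _).le (Real.abs_cos_le_one _)

/-- Fubini for `qk` against an integrable function -/
lemma qk_fubini (hd : 1 ≤ d) {α t : ℝ} (hα0 : 0 < α) (ht : 0 < t) {g : E → ℝ} (hg : Integrable g) (x : E) :
    ∫ z, qk α t (z - x) * g z = ∫ ξ : E, rexp (-(t * ‖ξ‖ ^ α)) * ∫ z, g z * Real.cos ⟪z - x, ξ⟫ := by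
  let F : E → E → ℝ := fun z ξ => rexp (-(t * ‖ξ‖ ^ α)) * (g z * Real.cos ⟪z - x, ξ⟫)
  have hint : Integrable (Function.uncurry F) (volume.prod volume) := by
    have h1 := hg.mul_prod (exp_int hd hα0 ht (d := d))
    have h2 := h1.mul_bdd (g := fun p : E × E => Real.cos ⟪p.1 - x, p.2⟫) (c := 1)
      (Continuous.aestronglyMeasurable (by fun_prop)) (ae_of_all _ fun p => by simpa using Real.abs_cos_le_one _)
    refine h2.congr (ae_of_all _ fun p => ?_)
    simp only [F, Function.uncurry]; ring
  have hsw := integral_integral_swap hint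
  simp only [F] at hsw
  simp_rw [integral_const_mul] at hsw
  rw [← hsw]
  refine integral_congr_ae (ae_of_all _ fun z => ?_)
  simp only [qk]
  rw [mul_comm, ← integral_const_mul]
  refine integral_congr_ae (ae_of_all _ fun ξ => ?_)
  dsimp only; ring

lemma qk_gauss (hd : 1 ≤ d) {α t : ℝ} (hα0 : 0 < α) (ht : 0 < t) {σ : ℝ} (hσ : 0 < σ) :
    ∫ z : E, qk α t z * rexp (-σ * ‖z‖ ^ 2) ≤ (2 * π) ^ (d : ℝ) := by
  have h := qk_fubini hd hα0 ht (gauss_int (d := d) hσ) 0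
  simp only [sub_zero] at h
  rw [h]
  have e : ∀ ξ : E, ∫ z : E, rexp (-σ * ‖z‖ ^ 2) * Real.cos ⟪z, ξ⟫ = (π / σ) ^ ((d : ℝ) / 2) * rexp (-(1 / (4 * σ)) * ‖ξ‖ ^ 2) := by
    intro ξ
    simp_rw [real_inner_comm ξ]
    rw [gauss_cos hσ]; congr 2; ring
  simp_rw [e]
  have hσ4 : 0 < 1 / (4 * σ) := by positivity
  have hgi := (gauss_int (d := d) hσ4).const_mul ((π / σ) ^ ((d : ℝ) / 2))
  calc _ ≤ ∫ ξ : E, (π / σ) ^ ((d : ℝ) / 2) * rexp (-(1 / (4 * σ)) * ‖ξ‖ ^ 2) := by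
        refine integral_mono_of_nonneg (ae_of_all _ fun ξ => by positivity) hgi (ae_of_all _ fun ξ => ?_)
        refine mul_le_of_le_one_left (by positivity) (Real.exp_le_one_iff.2 ?_)
        have : 0 ≤ t * ‖ξ‖ ^ α := by positivity
        linarith
    _ = (π / σ) ^ ((d : ℝ) / 2) * (π / (1 / (4 * σ))) ^ ((d : ℝ) / 2) := by
        rw [integral_const_mul]
        have := gauss_cos (d := d) hσ4 0
        simp only [inner_zero_left, Real.cos_zero, mul_one] at this
        rw [this]; simp
    _ = (2 * π) ^ (d : ℝ) := by
        rw [← Real.mul_rpow (by positivity) (by positivity)]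
        rw [show π / σ * (π / (1 / (4 * σ))) = (2 * π) ^ (2 : ℝ) by rw [Real.rpow_two]; field_simp; ring,
          ← Real.rpow_mul (by positivity)]
        congr 1; ring
    _ ≤ _ := le_rfl

lemma qk_mass (hd : 1 ≤ d) {α t : ℝ} (hα0 : 0 < α) (hα2 : α < 2) (ht : 0 < t) :
    Integrable (fun z : E => qk α t z) ∧ ∫ z : E, qk α t z ≤ (2 * π) ^ (d : ℝ) := by
  have hmeas : Measurable (fun z : E => qk α t z) := (qk_meas α).comp (by fun_prop : Measurable fun z : E => (t, z))
  have hnn := qk_nonneg hd hα0 hα2 ht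
  have key : ∫⁻ z : E, ENNReal.ofReal (qk α t z) ≤ ENNReal.ofReal ((2 * π) ^ (d : ℝ)) := by
    have hF := lintegral_liminf_le (u := (atTop : Filter ℕ)) (μ := (volume : Measure E)) (f := fun (n : ℕ) (z : E) => ENNReal.ofReal (qk α t z * rexp (-(1 / ((n : ℝ) + 1)) * ‖z‖ ^ 2)))
      (fun n => by fun_prop)
    have e : ∀ z : E, liminf (fun n : ℕ => ENNReal.ofReal (qk α t z * rexp (-(1 / ((n : ℝ) + 1)) * ‖z‖ ^ 2))) atTop = ENNReal.ofReal (qk α t z) := by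
      intro z
      refine Tendsto.liminf_eq ?_
      refine ENNReal.tendsto_ofReal ?_
      have := ((tendsto_one_div_add_atTop_nhds_zero_nat (𝕜 := ℝ)).neg.mul_const (‖z‖ ^ 2))
      have := ((Real.continuous_exp.tendsto _).comp this).const_mul (qk α t z)
      simpa [Function.comp_def] using this
    simp_rw [e] at hF
    refine hF.trans ?_
    refine liminf_le_of_le (by isBoundedDefault) fun b hb => ?_
    obtain ⟨n, hn⟩ := hb.exists
    refine hn.trans ?_
    rw [← ofReal_integral_eq_lintegral_ofReal]
    · exact ENNReal.ofReal_le_ofReal (qk_gauss hd hα0 ht (by positivity))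
    · exact (gauss_int (by positivity)).bdd_mul hmeas.aestronglyMeasurable (ae_of_all _ fun z => qk_le hd hα0 ht z)
    · exact ae_of_all _ fun z => mul_nonneg (hnn z) (Real.exp_pos _).le
  have hi : Integrable (fun z : E => qk α t z) := by
    refine ⟨hmeas.aestronglyMeasurable, ?_⟩
    rw [hasFiniteIntegral_iff_ofReal (ae_of_all _ hnn)]
    exact key.trans_lt ENNReal.ofReal_lt_top
  refine ⟨hi, ?_⟩
  rw [← ofReal_integral_eq_lintegral_ofReal hi (ae_of_all _ hnn)] at key
  exact (ENNReal.ofReal_le_ofReal_iff (by positivity)).1 key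

end C

section D
open scoped RealInnerProductSpace Topology FourierTransform
variable {d : ℕ}

local notation "E" => EuclideanSpace ℝ (Fin d)

lemma supp_R {F : Type*} [NormedAddCommGroup F] {φ : ℝ × E → F} (hφc : HasCompactSupport φ) : ∃ R : ℝ, 0 < R ∧ ∀ p, R < ‖p‖ → φ p = 0 := by
  obtain ⟨R, hR0, hR⟩ := hφc.isCompact.isBounded.subset_closedBall_lt 0 0
  refine ⟨R, hR0, fun p hp => ?_⟩
  by_contra h
  have := hR (subset_tsupport _ (Function.mem_support.2 h))
  rw [mem_closedBall_zero_iff] at this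
  linarith

lemma bdd_K {F : Type*} [NormedAddCommGroup F] {φ : ℝ × E → F} (hφ : Continuous φ) (hφc : HasCompactSupport φ) : ∃ K : ℝ, 0 ≤ K ∧ ∀ p, ‖φ p‖ ≤ K := by
  obtain ⟨K, hK⟩ := hφc.exists_bound_of_continuous hφ
  exact ⟨K, (norm_nonneg _).trans (hK 0), hK⟩

/-- slices are dominated by a fixed integrable function -/
lemma slice_bd {F : Type*} [NormedAddCommGroup F] {φ : ℝ × E → F} (hφ : Continuous φ) (hφc : HasCompactSupport φ) :
    ∃ b : E → ℝ, Integrable b ∧ ∀ u z, ‖φ (u, z)‖ ≤ b z := by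
  obtain ⟨R, hR0, hR⟩ := supp_R hφc
  obtain ⟨K, hK0, hK⟩ := bdd_K hφ hφc
  refine ⟨(Metric.closedBall 0 R).indicator (fun _ => K), ?_, fun u z => ?_⟩
  · rw [integrable_indicator_iff Metric.isClosed_closedBall.measurableSet]
    exact integrableOn_const (measure_closedBall_lt_top).ne
  · by_cases hz : z ∈ Metric.closedBall (0 : E) R
    · rw [Set.indicator_of_mem hz]; exact hK _
    · rw [Set.indicator_of_notMem hz, hR, norm_zero]
      rw [mem_closedBall_zero_iff, not_le] at hz
      exact hz.trans_le (norm_snd_le (u, z))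

lemma slice_int {F : Type*} [NormedAddCommGroup F] {φ : ℝ × E → F} (hφ : Continuous φ) (hφc : HasCompactSupport φ) (u : ℝ) :
    Integrable (fun z => φ (u, z)) := by
  obtain ⟨b, hb, h⟩ := slice_bd hφ hφc
  exact hb.mono' (Continuous.aestronglyMeasurable (by fun_prop)) (ae_of_all _ fun z => h u z)

lemma fourier_dec {Φ : ℝ × E → ℂ} (hΦ : ContDiff ℝ (⊤ : ℕ∞) Φ) (hΦc : HasCompactSupport Φ) (n : ℕ) :
    ∃ K : ℝ, ∀ u w, ‖w‖ ^ n * ‖𝓕 (fun z => Φ (u, z)) w‖ ≤ K := by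
  have hc : ∀ i : ℕ, Continuous (iteratedFDeriv ℝ i Φ) := fun i => hΦ.continuous_iteratedFDeriv (by exact_mod_cast le_top)
  have hcs : ∀ i : ℕ, HasCompactSupport (iteratedFDeriv ℝ i Φ) := fun i => hΦc.iteratedFDeriv i
  choose b hb hbb using fun i => slice_bd (hc i) (hcs i)
  have hle : ∀ i u z, ‖iteratedFDeriv ℝ i (fun z => Φ (u, z)) z‖ ≤ b i z := by
    intro i u z
    have e : (fun z => Φ (u, z)) = (fun p : ℝ × E => Φ ((u, 0) + p)) ∘ (ContinuousLinearMap.inr ℝ ℝ E) := by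
      ext z; simp
    have hs : ContDiff ℝ (⊤ : ℕ∞) (fun p : ℝ × E => Φ ((u, 0) + p)) := hΦ.comp (by fun_prop)
    rw [e, ContinuousLinearMap.iteratedFDeriv_comp_right _ hs _ (by exact_mod_cast le_top)]
    refine (ContinuousMultilinearMap.norm_compContinuousLinearMap_le _ _).trans ?_
    rw [iteratedFDeriv_comp_add_left]
    simp only [ContinuousLinearMap.inr_apply, Prod.mk_add_mk, add_zero, zero_add]
    refine (mul_le_of_le_one_right (norm_nonneg _) ?_).trans (hbb i u z)
    exact Finset.prod_le_one (fun _ _ => norm_nonneg _) (fun _ _ => ContinuousLinearMap.norm_inr_le_one _ _ _)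
  have hsm : ∀ u, ContDiff ℝ (⊤ : ℕ∞) (fun z => Φ (u, z)) := fun u => hΦ.comp (by fun_prop)
  have hint : ∀ u i, Integrable (fun z => ‖iteratedFDeriv ℝ i (fun z => Φ (u, z)) z‖) := by
    intro u i
    refine (hb i).mono' ?_ (ae_of_all _ fun z => by simpa using hle i u z)
    exact ((hsm u).continuous_iteratedFDeriv (by exact_mod_cast le_top)).norm.aestronglyMeasurable
  refine ⟨2 ^ n * ∑ i ∈ Finset.range (n + 1), ∫ z, b i z, fun u w => ?_⟩
  have h := Real.pow_mul_norm_iteratedFDeriv_fourier_le (f := fun z => Φ (u, z)) (K := 0) (N := ⊤) (hsm u) (by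
    intro k i hk _
    have : k = 0 := by simpa using hk
    subst this
    simpa using hint u i) (k := 0) (n := n) le_rfl le_top w
  simp only [norm_iteratedFDeriv_zero] at h
  refine h.trans ?_
  rw [Finset.sum_product]
  simp
  gcongr with i hi
  · exact hint u i
  · exact hb i
  · exact fun z => hle i u z

lemma fourier_dec2 {Φ : ℝ × E → ℂ} (hΦ : ContDiff ℝ (⊤ : ℕ∞) Φ) (hΦc : HasCompactSupport Φ) (N : ℕ) :
    ∃ K : ℝ, 0 ≤ K ∧ ∀ u w, ‖𝓕 (fun z => Φ (u, z)) w‖ ≤ K * (1 + ‖w‖) ^ (-(N : ℝ)) := by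
  obtain ⟨K0, h0⟩ := fourier_dec hΦ hΦc 0
  obtain ⟨K1, h1⟩ := fourier_dec hΦ hΦc N
  have hK0 : 0 ≤ K0 := le_trans (by positivity) (h0 0 0)
  have hK1 : 0 ≤ K1 := le_trans (by positivity) (h1 0 0)
  refine ⟨2 ^ (N - 1) * (K0 + K1), by positivity, fun u w => ?_⟩
  have hw : 0 < 1 + ‖w‖ := by positivity
  rw [Real.rpow_neg hw.le, Real.rpow_natCast, ← div_eq_mul_inv, le_div_iff₀ (by positivity)]
  have hp := add_pow_le (zero_le_one' ℝ) (norm_nonneg w) N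
  have := h0 u w
  have := h1 u w
  have hn := norm_nonneg (𝓕 (fun z => Φ (u, z)) w)
  calc _ ≤ ‖𝓕 (fun z => Φ (u, z)) w‖ * (2 ^ (N - 1) * (1 ^ N + ‖w‖ ^ N)) := by gcongr
    _ = 2 ^ (N - 1) * (‖w‖ ^ 0 * ‖𝓕 (fun z => Φ (u, z)) w‖ + ‖w‖ ^ N * ‖𝓕 (fun z => Φ (u, z)) w‖) := by
      rw [one_pow, pow_zero]; ring
    _ ≤ _ := by gcongr

noncomputable def Ct (φ : ℝ × EuclideanSpace ℝ (Fin d) → ℝ) (x : EuclideanSpace ℝ (Fin d)) (u : ℝ)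
    (ξ : EuclideanSpace ℝ (Fin d)) : ℝ := ∫ z, φ (u, z) * Real.cos ⟪z - x, ξ⟫

lemma Ct_eq {φ : ℝ × E → ℝ} (hφ : Continuous φ) (hφc : HasCompactSupport φ) (x : E) (u : ℝ) (w : E) :
    Ct φ x u ((2 * π) • w) = (Complex.exp (((2 * π * ⟪w, x⟫ : ℝ) : ℂ) * Complex.I) • 𝓕 (fun z => (φ (u, z) : ℂ)) w).re := by
  rw [Real.fourier_eq', ← integral_smul]
  have hi : Integrable (fun v : E => Complex.exp (((2 * π * ⟪w, x⟫ : ℝ) : ℂ) * Complex.I) • (Complex.exp (((-2 * π * ⟪v, w⟫ : ℝ) : ℂ) * Complex.I) • (φ (u, v) : ℂ))) := by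
    have h1 := (slice_int hφ hφc u).ofReal (𝕜 := ℂ)
    refine Integrable.smul (Complex.exp (((2 * π * ⟪w, x⟫ : ℝ) : ℂ) * Complex.I)) ?_
    simp only [smul_eq_mul]
    refine h1.bdd_mul (c := 1) (Continuous.aestronglyMeasurable (by fun_prop)) (ae_of_all _ fun v => ?_)
    rw [Complex.norm_exp_ofReal_mul_I]
  have h4 := integral_re hi
  simp only [RCLike.re_eq_complex_re] at h4
  rw [← h4, Ct]
  refine integral_congr_ae (ae_of_all _ fun v => ?_)
  dsimp only
  rw [smul_smul, ← Complex.exp_add, ← add_mul, ← Complex.ofReal_add, smul_eq_mul, Complex.re_mul_ofReal,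
    Complex.exp_ofReal_mul_I_re, mul_comm]
  congr 1
  rw [← Real.cos_neg]
  congr 1
  rw [inner_smul_right, inner_sub_left, real_inner_comm w x]
  ring

lemma Ct_dec {φ : ℝ × E → ℝ} (hφ : ContDiff ℝ (⊤ : ℕ∞) φ) (hφc : HasCompactSupport φ) (N : ℕ) :
    ∃ K : ℝ, 0 ≤ K ∧ ∀ x u ξ, |Ct φ x u ξ| ≤ K * (1 + ‖ξ‖) ^ (-(N : ℝ)) := by
  have hΦ : ContDiff ℝ (⊤ : ℕ∞) (fun p => (φ p : ℂ)) := Complex.ofRealCLM.contDiff.comp hφ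
  have hΦc : HasCompactSupport (fun p => (φ p : ℂ)) := hφc.comp_left (g := fun r : ℝ => (r : ℂ)) (by simp)
  obtain ⟨K, hK0, hK⟩ := fourier_dec2 hΦ hΦc N
  refine ⟨K * (2 * π) ^ (N : ℝ), by positivity, fun x u ξ => ?_⟩
  have hpi : (2 * π) ≠ 0 := by positivity
  have e := Ct_eq hφ.continuous hφc x u ((2 * π)⁻¹ • ξ)
  rw [smul_smul, mul_inv_cancel₀ hpi, one_smul] at e
  rw [e]
  refine (Complex.abs_re_le_norm _).trans ?_
  rw [norm_smul, Complex.norm_exp_ofReal_mul_I, one_mul]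
  refine (hK u _).trans ?_
  rw [mul_assoc]
  gcongr
  rw [norm_smul, Real.norm_eq_abs, abs_of_pos (by positivity), Real.rpow_neg (by positivity), Real.rpow_neg (by positivity),
    Real.rpow_natCast, Real.rpow_natCast, Real.rpow_natCast, ← div_eq_mul_inv, le_div_iff₀ (by positivity), inv_mul_le_iff₀ (by positivity), mul_comm, ← mul_pow]
  gcongr
  have : 1 ≤ 2 * π := by nlinarith [Real.pi_gt_three]
  rw [mul_add, ← mul_assoc, mul_inv_cancel₀ hpi, one_mul, mul_one]
  linarith

lemma one_add_int (N : ℕ) (hN : d < N) : Integrable (fun ξ : E => (1 + ‖ξ‖) ^ (-(N : ℝ))) := by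
  refine integrable_one_add_norm ?_
  simpa using hN

lemma Ct_meas {φ : ℝ × E → ℝ} (hφ : Continuous φ) (x : E) : Measurable (fun p : ℝ × E => Ct φ x p.1 p.2) := by
  unfold Ct
  refine (StronglyMeasurable.integral_prod_right (f := fun (p : ℝ × E) (z : E) => φ (p.1, z) * Real.cos ⟪z - x, p.2⟫) ?_).measurable
  refine Continuous.stronglyMeasurable ?_
  simp only [Function.uncurry_def]
  fun_prop

lemma Ct_inv {φ : ℝ × E → ℝ} (hφ : ContDiff ℝ (⊤ : ℕ∞) φ) (hφc : HasCompactSupport φ) (x : E) (s : ℝ) :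
    ∫ ξ, Ct φ x s ξ = (2 * π) ^ (d : ℝ) * φ (s, x) := by
  have hΦ : ContDiff ℝ (⊤ : ℕ∞) (fun p => (φ p : ℂ)) := Complex.ofRealCLM.contDiff.comp hφ
  have hΦc : HasCompactSupport (fun p => (φ p : ℂ)) := hφc.comp_left (g := fun r : ℝ => (r : ℂ)) (by simp)
  obtain ⟨K, hK0, hK⟩ := fourier_dec2 hΦ hΦc (d + 1)
  have hi := (slice_int hφ.continuous hφc s).ofReal (𝕜 := ℂ)
  have hFc : Continuous (𝓕 (fun z => (φ (s, z) : ℂ))) := by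
    exact VectorFourier.fourierIntegral_continuous Real.continuous_fourierChar (by exact continuous_inner) hi
  have hFi : Integrable (𝓕 (fun z => (φ (s, z) : ℂ))) := by
    refine ((one_add_int (d := d) (d + 1) (by omega)).const_mul K).mono' hFc.aestronglyMeasurable (ae_of_all _ fun w => hK s w)
  have hcont := hφ.continuous
  have hinv := hi.fourierInv_fourier_eq hFi (v := x) (Continuous.continuousAt (by fun_prop))
  rw [Real.fourierInv_eq'] at hinv
  have h2 := congrArg Complex.re hinv
  have hi2 : Integrable (fun w : E => Complex.exp (((2 * π * ⟪w, x⟫ : ℝ) : ℂ) * Complex.I) • 𝓕 (fun z => (φ (s, z) : ℂ)) w) := by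
    simp only [smul_eq_mul]
    refine hFi.bdd_mul (c := 1) (Continuous.aestronglyMeasurable (by fun_prop)) (ae_of_all _ fun v => ?_)
    rw [Complex.norm_exp_ofReal_mul_I]
  have h4 := integral_re hi2
  simp only [RCLike.re_eq_complex_re] at h4
  have h5 : ∫ w, Ct φ x s ((2 * π) • w) = φ (s, x) := by
    simp_rw [Ct_eq hφ.continuous hφc]
    rw [h4]
    simpa using h2
  rw [Measure.integral_comp_smul] at h5
  have hp : 0 < (2 * π) ^ d := by positivity
  rw [← h5, finrank_euclideanSpace, Fintype.card_fin, abs_of_pos (by positivity), Real.rpow_natCast, smul_eq_mul,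
    mul_inv_cancel_left₀ hp.ne']

/-- time derivative -/
noncomputable def dT (φ : ℝ × EuclideanSpace ℝ (Fin d) → ℝ) (p : ℝ × EuclideanSpace ℝ (Fin d)) : ℝ :=
  fderiv ℝ φ p (1, 0)

lemma dT_smooth {φ : ℝ × E → ℝ} (hφ : ContDiff ℝ (⊤ : ℕ∞) φ) : ContDiff ℝ (⊤ : ℕ∞) (dT φ) := by
  unfold dT
  exact (hφ.fderiv_right (m := (⊤ : ℕ∞)) (by exact_mod_cast le_top)).clm_apply contDiff_const

lemma dT_supp {φ : ℝ × E → ℝ} (hφc : HasCompactSupport φ) : HasCompactSupport (dT φ) := by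
  exact hφc.fderiv_apply ℝ (1, 0)

lemma dT_has {φ : ℝ × E → ℝ} (hφ : ContDiff ℝ (⊤ : ℕ∞) φ) (u : ℝ) (z : E) :
    HasDerivAt (fun v => φ (v, z)) (dT φ (u, z)) u := by
  have h1 : HasFDerivAt φ (fderiv ℝ φ (u, z)) (u, z) := (hφ.differentiable (by simp) _).hasFDerivAt
  have h2 : HasDerivAt (fun v : ℝ => (v, z)) ((1 : ℝ), (0 : E)) u := (hasDerivAt_id u).prodMk (hasDerivAt_const u z)
  exact h1.comp_hasDerivAt u h2

lemma Ct_deriv {φ : ℝ × E → ℝ} (hφ : ContDiff ℝ (⊤ : ℕ∞) φ) (hφc : HasCompactSupport φ) (x : E) (u : ℝ) (ξ : E) :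
    HasDerivAt (fun v => Ct φ x v ξ) (Ct (dT φ) x u ξ) u := by
  obtain ⟨b, hb, hbb⟩ := slice_bd (dT_smooth hφ).continuous (dT_supp hφc)
  have hc := hφ.continuous
  have hc' := (dT_smooth hφ).continuous
  refine (hasDerivAt_integral_of_dominated_loc_of_deriv_le (s := Set.univ) (bound := b) (F := fun v z => φ (v, z) * Real.cos ⟪z - x, ξ⟫)
    (F' := fun v z => dT φ (v, z) * Real.cos ⟪z - x, ξ⟫) univ_mem ?_ ?_ ?_ ?_ hb ?_).2
  · exact Eventually.of_forall fun v => Continuous.aestronglyMeasurable (by fun_prop)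
  · refine (slice_int hc hφc u).mul_bdd (c := 1) (Continuous.aestronglyMeasurable (by fun_prop)) (ae_of_all _ fun v => ?_)
    simpa using Real.abs_cos_le_one _
  · exact Continuous.aestronglyMeasurable (by fun_prop)
  · refine ae_of_all _ fun z v _ => ?_
    rw [norm_mul]
    exact (mul_le_of_le_one_right (norm_nonneg _) (by simpa using Real.abs_cos_le_one _)).trans (hbb v z)
  · exact ae_of_all _ fun z v _ => (dT_has hφ v z).mul_const _

end D

section F
variable {d : ℕ}

local notation "E" => EuclideanSpace ℝ (Fin d)

noncomputable def nu0 (α : ℝ) (y : EuclideanSpace ℝ (Fin d)) : ℝ :=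
  (2 : ℝ) ^ α * Real.Gamma (((d : ℝ) + α) / 2) /
        (Real.pi ^ ((d : ℝ) / 2) * |Real.Gamma (-α / 2)|) * ‖y‖ ^ (-((d : ℝ) + α))

lemma nu0_nonneg {α : ℝ} (hα0 : 0 < α) (y : E) : 0 ≤ nu0 α y := by
  unfold nu0
  have : 0 < Real.Gamma (((d : ℝ) + α) / 2) := Real.Gamma_pos_of_pos (by positivity)
  positivity

lemma nu0_meas (α : ℝ) : Measurable (nu0 α : E → ℝ) := by
  unfold nu0; fun_prop

lemma nu0_neg (α : ℝ) (y : E) : nu0 α (-y) = nu0 α y := by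
  unfold nu0; rw [norm_neg]

lemma nu0_int (hd : 1 ≤ d) {α : ℝ} (hα0 : 0 < α) (hα2 : α < 2) :
    Integrable (fun y : E => min 1 (‖y‖ ^ 2) * nu0 α y) := by
  refine ((nu_int hd hα0 hα2).const_mul ((2 : ℝ) ^ α * Real.Gamma (((d : ℝ) + α) / 2) /
        (Real.pi ^ ((d : ℝ) / 2) * |Real.Gamma (-α / 2)|))).congr (ae_of_all _ fun y => ?_)
  simp only [nu0]; ring

def D2 (φ : ℝ × EuclideanSpace ℝ (Fin d) → ℝ) (u : ℝ) (z y : EuclideanSpace ℝ (Fin d)) : ℝ :=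
  φ (u, z + y) + φ (u, z - y) - 2 * φ (u, z)

lemma D2_bd {φ : ℝ × E → ℝ} (hφ : ContDiff ℝ (⊤ : ℕ∞) φ) (hφc : HasCompactSupport φ) :
    ∃ K : ℝ, 0 ≤ K ∧ ∀ u z y, |D2 φ u z y| ≤ K * min 1 (‖y‖ ^ 2) := by
  obtain ⟨K0, hK0, hK⟩ := bdd_K hφ.continuous hφc
  have hf : ContDiff ℝ (⊤ : ℕ∞) (fderiv ℝ φ) := hφ.fderiv_right (by exact_mod_cast le_top)
  obtain ⟨C, hC⟩ := hf.lipschitzWith_of_hasCompactSupport (hφc.fderiv ℝ) (by simp)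
  refine ⟨4 * K0 + 2 * C, by positivity, fun u z y => ?_⟩
  have h1 : |D2 φ u z y| ≤ 4 * K0 := by
    have a1 := abs_le.1 (hK (u, z + y))
    have a2 := abs_le.1 (hK (u, z - y))
    have a3 := abs_le.1 (hK (u, z))
    unfold D2
    rw [abs_le]; constructor <;> linarith
  have h2 : |D2 φ u z y| ≤ 2 * C * ‖y‖ ^ 2 := by
    have hd1 : ∀ w : E, HasFDerivAt (fun w : E => φ (u, z + w) + φ (u, z - w))
        ((fderiv ℝ φ (u, z + w) - fderiv ℝ φ (u, z - w)).comp (ContinuousLinearMap.inr ℝ ℝ E)) w := by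
      intro w
      have b1 : HasFDerivAt (fun w : E => (u, z + w)) (ContinuousLinearMap.inr ℝ ℝ E) w := by
        have := (hasFDerivAt_const (𝕜 := ℝ) u w).prodMk ((hasFDerivAt_id (𝕜 := ℝ) w).const_add z)
        exact this
      have b2 : HasFDerivAt (fun w : E => (u, z - w)) (-ContinuousLinearMap.inr ℝ ℝ E) w := by
        have := (hasFDerivAt_const (𝕜 := ℝ) u w).prodMk ((hasFDerivAt_id (𝕜 := ℝ) w).const_sub z)
        convert! this using 1
        ext v <;> simp
      have c1 := ((hφ.differentiable (by simp) (u, z + w)).hasFDerivAt).comp w b1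
      have c2 := ((hφ.differentiable (by simp) (u, z - w)).hasFDerivAt).comp w b2
      convert! c1.add c2 using 1
      ext v; simp [sub_eq_add_neg]
    have hb : ∀ w ∈ Metric.closedBall (0 : E) ‖y‖, ‖(fderiv ℝ φ (u, z + w) - fderiv ℝ φ (u, z - w)).comp (ContinuousLinearMap.inr ℝ ℝ E)‖ ≤ 2 * C * ‖y‖ := by
      intro w hw
      rw [mem_closedBall_zero_iff] at hw
      refine (ContinuousLinearMap.opNorm_comp_le _ _).trans ?_
      refine (mul_le_of_le_one_right (norm_nonneg _) (ContinuousLinearMap.norm_inr_le_one _ _ _)).trans ?_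
      have := hC.dist_le_mul (u, z + w) (u, z - w)
      rw [dist_eq_norm, dist_eq_norm] at this
      refine this.trans ?_
      have e : ((u, z + w) - (u, z - w) : ℝ × E) = (0, (2 : ℝ) • w) := by
        ext1
        · simp
        · simp [two_smul]
      rw [e, Prod.norm_mk, norm_zero, norm_smul, max_eq_right (by positivity)]
      simp only [Real.norm_ofNat]
      calc (C : ℝ) * (2 * ‖w‖) ≤ C * (2 * ‖y‖) := by gcongr
        _ = _ := by ring
    have := (convex_closedBall (0 : E) ‖y‖).norm_image_sub_le_of_norm_hasFDerivWithin_le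
      (fun w _ => (hd1 w).hasFDerivWithinAt) hb (x := 0) (y := y) (by simp) (by simp)
    simp only [add_zero, sub_zero] at this
    rw [Real.norm_eq_abs] at this
    unfold D2
    calc _ = |φ (u, z + y) + φ (u, z - y) - (φ (u, z) + φ (u, z))| := by ring_nf
      _ ≤ _ := this
      _ = _ := by ring
  rcases le_total 1 (‖y‖ ^ 2) with h | h
  · rw [min_eq_left h, mul_one]; linarith [C.2]
  · rw [min_eq_right h]; nlinarith [sq_nonneg ‖y‖]

noncomputable def Lap (α : ℝ) (φ : ℝ × EuclideanSpace ℝ (Fin d) → ℝ) (u : ℝ) (z : EuclideanSpace ℝ (Fin d)) : ℝ :=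
  (1 / 2) * ∫ y, D2 φ u z y * nu0 α y

lemma D2nu_int (hd : 1 ≤ d) {α : ℝ} (hα0 : 0 < α) (hα2 : α < 2) {φ : ℝ × E → ℝ} (hφ : ContDiff ℝ (⊤ : ℕ∞) φ) (hφc : HasCompactSupport φ)
    (u : ℝ) (z : E) : Integrable (fun y => D2 φ u z y * nu0 α y) := by
  obtain ⟨K, hK0, hK⟩ := D2_bd hφ hφc
  have hc := hφ.continuous
  have hm := nu0_meas (d := d) α
  refine ((nu0_int hd hα0 hα2).const_mul K).mono' ?_ (ae_of_all _ fun y => ?_)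
  · refine (Measurable.mul ?_ hm).aestronglyMeasurable
    unfold D2
    exact Continuous.measurable (by fun_prop)
  · rw [norm_mul, Real.norm_eq_abs, Real.norm_eq_abs, abs_of_nonneg (nu0_nonneg hα0 y), ← mul_assoc]
    exact mul_le_mul_of_nonneg_right (hK u z y) (nu0_nonneg hα0 y)

lemma Lap_bd (hd : 1 ≤ d) {α : ℝ} (hα0 : 0 < α) (hα2 : α < 2) {φ : ℝ × E → ℝ} (hφ : ContDiff ℝ (⊤ : ℕ∞) φ) (hφc : HasCompactSupport φ) :
    ∃ K : ℝ, ∀ u z, |Lap α φ u z| ≤ K := by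
  obtain ⟨K, hK0, hK⟩ := D2_bd hφ hφc
  refine ⟨1 / 2 * ∫ y : E, K * (min 1 (‖y‖ ^ 2) * nu0 α y), fun u z => ?_⟩
  unfold Lap
  rw [abs_mul, abs_of_pos (by norm_num : (0 : ℝ) < 1 / 2)]
  refine mul_le_mul_of_nonneg_left ?_ (by norm_num)
  rw [← Real.norm_eq_abs]
  refine norm_integral_le_of_norm_le ((nu0_int hd hα0 hα2).const_mul K) (ae_of_all _ fun y => ?_)
  rw [norm_mul, Real.norm_eq_abs, Real.norm_eq_abs, abs_of_nonneg (nu0_nonneg hα0 y), ← mul_assoc]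
  exact mul_le_mul_of_nonneg_right (hK u z y) (nu0_nonneg hα0 y)

lemma Lap_meas {α : ℝ} {φ : ℝ × E → ℝ} (hφ : Continuous φ) : Measurable (fun p : ℝ × E => Lap α φ p.1 p.2) := by
  unfold Lap
  refine Measurable.const_mul ?_ _
  refine (StronglyMeasurable.integral_prod_right (f := fun (p : ℝ × E) (y : E) => D2 φ p.1 p.2 y * nu0 α y) ?_).measurable
  refine Measurable.stronglyMeasurable ?_
  simp only [Function.uncurry_def]
  refine Measurable.mul ?_ ((nu0_meas α).comp measurable_snd)
  unfold D2
  exact Continuous.measurable (by fun_prop)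

lemma Lap_eq (hd : 1 ≤ d) {α : ℝ} (hα0 : 0 < α) (hα2 : α < 2) {φ : ℝ × E → ℝ} (hφ : ContDiff ℝ (⊤ : ℕ∞) φ) (hφc : HasCompactSupport φ)
    (ν : E → ℝ) (hν : ∀ y, y ≠ 0 → ν y = nu0 α y) (u : ℝ) (z : E) (L : ℝ)
    (hL : Tendsto (fun ε : ℝ => ∫ y in {y : E | ε < ‖y‖}, (φ (u, z + y) - φ (u, z)) * ν y) (𝓝[>] (0 : ℝ)) (𝓝 L)) :
    L = Lap α φ u z := by
  refine tendsto_nhds_unique hL ?_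
  have hS : ∀ ε : ℝ, MeasurableSet {y : E | ε < ‖y‖} := fun ε => measurableSet_lt measurable_const measurable_norm
  have hc := hφ.continuous
  obtain ⟨K0, hK0, hK⟩ := bdd_K hc hφc
  have hI := D2nu_int hd hα0 hα2 hφ hφc u z
  -- identity for ε > 0
  have key : ∀ ε : ℝ, 0 < ε → ∫ y in {y : E | ε < ‖y‖}, (φ (u, z + y) - φ (u, z)) * ν y
      = (1 / 2) * ∫ y in {y : E | ε < ‖y‖}, D2 φ u z y * nu0 α y := by
    intro ε hε
    have e1 : ∫ y in {y : E | ε < ‖y‖}, (φ (u, z + y) - φ (u, z)) * ν y = ∫ y in {y : E | ε < ‖y‖}, (φ (u, z + y) - φ (u, z)) * nu0 α y := by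
      refine setIntegral_congr_fun (hS ε) fun y hy => ?_
      have : y ≠ 0 := norm_pos_iff.1 (hε.trans hy)
      simp only [hν y this]
    have hi : IntegrableOn (fun y => (φ (u, z + y) - φ (u, z)) * nu0 α y) {y : E | ε < ‖y‖} := by
      set m := min 1 (ε ^ 2) with hm
      have hm0 : 0 < m := by positivity
      refine (((nu0_int hd hα0 hα2).const_mul (2 * K0 / m)).integrableOn).mono' ?_ ?_
      · refine (Measurable.mul ?_ (nu0_meas α)).aestronglyMeasurable
        exact Continuous.measurable (by fun_prop)
      · refine (ae_restrict_iff' (hS ε)).2 (ae_of_all _ fun y hy => ?_)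
        have hy' : ε < ‖y‖ := hy
        have hmy : m ≤ min 1 (‖y‖ ^ 2) := by
          rw [hm]; gcongr
        rw [norm_mul, Real.norm_eq_abs, Real.norm_eq_abs, abs_of_nonneg (nu0_nonneg hα0 y), ← mul_assoc]
        refine mul_le_mul_of_nonneg_right ?_ (nu0_nonneg hα0 y)
        have a1 := abs_le.1 (hK (u, z + y))
        have a3 := abs_le.1 (hK (u, z))
        calc |φ (u, z + y) - φ (u, z)| ≤ 2 * K0 := by rw [abs_le]; constructor <;> linarith
          _ = 2 * K0 / m * m := by field_simp
          _ ≤ _ := by gcongr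
    -- reflect
    have e2 : ∫ y in {y : E | ε < ‖y‖}, (φ (u, z - y) - φ (u, z)) * nu0 α y = ∫ y in {y : E | ε < ‖y‖}, (φ (u, z + y) - φ (u, z)) * nu0 α y := by
      rw [← integral_indicator (hS ε), ← integral_indicator (hS ε), ← integral_neg_eq_self]
      refine integral_congr_ae (ae_of_all _ fun y => ?_)
      simp only [Set.indicator, Set.mem_ofPred_eq, norm_neg, sub_neg_eq_add, nu0_neg]
    have hi2 : IntegrableOn (fun y => (φ (u, z - y) - φ (u, z)) * nu0 α y) {y : E | ε < ‖y‖} := by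
      have h1 := (hI.integrableOn (s := {y : E | ε < ‖y‖})).sub hi
      refine h1.congr (ae_of_all _ fun y => ?_)
      simp only [D2, Pi.sub_apply]; ring
    have e3 : ∫ y in {y : E | ε < ‖y‖}, D2 φ u z y * nu0 α y = (∫ y in {y : E | ε < ‖y‖}, (φ (u, z + y) - φ (u, z)) * nu0 α y) + ∫ y in {y : E | ε < ‖y‖}, (φ (u, z - y) - φ (u, z)) * nu0 α y := by
      rw [← integral_add hi hi2]
      refine integral_congr_ae (ae_of_all _ fun y => ?_)
      simp only [D2]; ring
    rw [e1, e3, e2]; ring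
  have lim : Tendsto (fun ε : ℝ => (1 / 2) * ∫ y in {y : E | ε < ‖y‖}, D2 φ u z y * nu0 α y) (𝓝[>] (0 : ℝ)) (𝓝 (Lap α φ u z)) := by
    unfold Lap
    refine Tendsto.const_mul _ ?_
    simp_rw [← integral_indicator (hS _)]
    refine tendsto_integral_filter_of_dominated_convergence (fun y => ‖D2 φ u z y * nu0 α y‖) ?_ ?_ hI.norm ?_
    · exact Eventually.of_forall fun ε => (hI.indicator (hS ε)).aestronglyMeasurable
    · exact Eventually.of_forall fun ε => ae_of_all _ fun y => norm_indicator_le_norm_self _ _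
    · refine ae_of_all _ fun y => ?_
      by_cases hy : y = 0
      · have : D2 φ u z y = 0 := by simp [D2, hy]; ring
        have h0 : ∀ ε : ℝ, ({y : E | ε < ‖y‖}.indicator (fun y => D2 φ u z y * nu0 α y) y) = 0 := by
          intro ε; simp [Set.indicator, this]
        simp_rw [h0, this, zero_mul]
        exact tendsto_const_nhds
      · refine tendsto_const_nhds.congr' ?_
        have : Set.Ioo 0 ‖y‖ ∈ 𝓝[>] (0 : ℝ) := Ioo_mem_nhdsGT (norm_pos_iff.2 hy)
        filter_upwards [this] with ε hε
        rw [Set.indicator_of_mem (by exact hε.2)]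
  refine lim.congr' ?_
  filter_upwards [self_mem_nhdsWithin] with ε hε
  exact (key ε hε).symm

lemma D2_cos {φ : ℝ × E → ℝ} (hφ : Continuous φ) (hφc : HasCompactSupport φ) (x : E) (u : ℝ) (ξ y : E) :
    ∫ z, D2 φ u z y * Real.cos ⟪z - x, ξ⟫ = -2 * (1 - Real.cos ⟪ξ, y⟫) * Ct φ x u ξ := by
  have hs := slice_int hφ hφc u
  have hb : ∀ a : E, Integrable (fun z => φ (u, z) * Real.cos ⟪z + a, ξ⟫) := by
    intro a
    refine hs.mul_bdd (c := 1) (Continuous.aestronglyMeasurable (by fun_prop)) (ae_of_all _ fun v => ?_)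
    simpa using Real.abs_cos_le_one _
  have i1 := (hb (-y - x)).comp_add_right y
  have i2 := (hb (y - x)).comp_add_right (-y)
  have s1 := integral_add_right_eq_self (μ := volume) (fun z => φ (u, z) * Real.cos ⟪z + (-y - x), ξ⟫) y
  have s2 := integral_add_right_eq_self (μ := volume) (fun z => φ (u, z) * Real.cos ⟪z + (y - x), ξ⟫) (-y)
  have e : ∀ z, D2 φ u z y * Real.cos ⟪z - x, ξ⟫ = φ (u, z + y) * Real.cos ⟪z + y + (-y - x), ξ⟫ +
     φ (u, z + -y) * Real.cos ⟪z + -y + (y - x), ξ⟫ - 2 * (φ (u, z) * Real.cos ⟪z + -x, ξ⟫) := by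
    intro z
    rw [show z + y + (-y - x) = z - x by abel, show z + -y + (y - x) = z - x by abel, D2, sub_eq_add_neg z y, sub_eq_add_neg z x]
    ring
  simp_rw [e]
  have i12 : Integrable (fun z => φ (u, z + y) * Real.cos ⟪z + y + (-y - x), ξ⟫ +
     φ (u, z + -y) * Real.cos ⟪z + -y + (y - x), ξ⟫) := i1.add i2
  have b12 : Integrable (fun z => φ (u, z) * Real.cos ⟪z + (-y - x), ξ⟫ +
     φ (u, z) * Real.cos ⟪z + (y - x), ξ⟫) := (hb _).add (hb _)
  rw [integral_sub i12 ((hb _).const_mul 2), integral_add i1 i2, s1, s2, ← integral_add (hb _) (hb _),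
    ← integral_sub b12 ((hb _).const_mul 2), Ct, ← integral_const_mul]
  refine integral_congr_ae (ae_of_all _ fun z => ?_)
  simp only
  have c1 : ⟪z + (-y - x), ξ⟫ = ⟪z - x, ξ⟫ - ⟪ξ, y⟫ := by
    rw [real_inner_comm y ξ, ← inner_sub_left]; congr 1; abel
  have c2 : ⟪z + (y - x), ξ⟫ = ⟪z - x, ξ⟫ + ⟪ξ, y⟫ := by
    rw [real_inner_comm y ξ, ← inner_add_left]; congr 1; abel
  rw [c1, c2, ← sub_eq_add_neg z x, Real.cos_add, Real.cos_sub]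
  ring

lemma D2_prod (hd : 1 ≤ d) {α : ℝ} (hα0 : 0 < α) (hα2 : α < 2) {φ : ℝ × E → ℝ} (hφ : ContDiff ℝ (⊤ : ℕ∞) φ) (hφc : HasCompactSupport φ) (u : ℝ) :
    Integrable (fun p : E × E => D2 φ u p.2 p.1 * nu0 α p.1) (volume.prod volume) := by
  obtain ⟨K, hK0, hK⟩ := D2_bd hφ hφc
  obtain ⟨R, hR0, hR⟩ := supp_R hφc
  have hc := hφ.continuous
  have hs := slice_int hc hφc u
  have hDm : Measurable (fun p : E × E => D2 φ u p.2 p.1 * nu0 α p.1) := by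
    refine Measurable.mul ?_ ((nu0_meas α).comp measurable_fst)
    unfold D2
    exact Continuous.measurable (by fun_prop)
  have i1 : ∀ y, Integrable (fun z => φ (u, z + y)) := fun y => hs.comp_add_right y
  have i2 : ∀ y, Integrable (fun z => φ (u, z - y)) := fun y => hs.comp_sub_right y
  have hD : ∀ y, Integrable (fun z => D2 φ u z y) := fun y => ((i1 y).add (i2 y)).sub (hs.const_mul 2)
  rw [integrable_prod_iff hDm.aestronglyMeasurable]
  refine ⟨ae_of_all _ fun y => ?_, ?_⟩
  · change Integrable (fun z => D2 φ u z y * nu0 α y) volume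
    exact (hD y).mul_const (nu0 α y)
  set V : ℝ := volume.real (Metric.closedBall (0 : E) (R + 1)) with hV
  set M : ℝ := K * V + 4 * ∫ z, |φ (u, z)| with hM
  have hI0 : 0 ≤ ∫ z, |φ (u, z)| := integral_nonneg fun z => abs_nonneg _
  have hbound : ∀ y, ∫ z, |D2 φ u z y| ≤ M * min 1 (‖y‖ ^ 2) := by
    intro y
    rcases le_total 1 ‖y‖ with hy | hy
    · rw [min_eq_left (by nlinarith), mul_one]
      have j1 := (i1 y).norm
      have j2 := (i2 y).norm
      have j3 := hs.norm
      simp only [Real.norm_eq_abs] at j1 j2 j3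
      calc ∫ z, |D2 φ u z y| ≤ ∫ z, ((|φ (u, z + y)| + |φ (u, z - y)|) + 2 * |φ (u, z)|) := by
            refine integral_mono (hD y).abs ((j1.add j2).add (j3.const_mul 2)) fun z => ?_
            simp only [D2]
            refine (abs_sub _ _).trans ?_
            rw [abs_mul, abs_two]
            gcongr
            exact abs_add_le _ _
        _ = 4 * ∫ z, |φ (u, z)| := by
            have j12 : Integrable (fun z => |φ (u, z + y)| + |φ (u, z - y)|) := j1.add j2
            rw [integral_add j12 (j3.const_mul 2), integral_add j1 j2, integral_const_mul,
              integral_add_right_eq_self (fun z => |φ (u, z)|) y, integral_sub_right_eq_self (fun z => |φ (u, z)|) y]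
            ring
        _ ≤ M := by rw [hM]; have : 0 ≤ K * V := by positivity
                    linarith
    · calc ∫ z, |D2 φ u z y| ≤ ∫ z, (Metric.closedBall (0 : E) (R + 1)).indicator (fun _ => K * min 1 (‖y‖ ^ 2)) z := by
            refine integral_mono (hD y).abs ?_ fun z => ?_
            · rw [integrable_indicator_iff Metric.isClosed_closedBall.measurableSet]
              exact integrableOn_const (measure_closedBall_lt_top).ne
            · by_cases hz : z ∈ Metric.closedBall (0 : E) (R + 1)
              · rw [Set.indicator_of_mem hz]; exact hK u z y
              · rw [Set.indicator_of_notMem hz]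
                rw [mem_closedBall_zero_iff, not_le] at hz
                have t1 : ‖z‖ ≤ ‖z + y‖ + ‖y‖ := by
                  have := norm_sub_le (z + y) y; simpa using this
                have t2 : ‖z‖ ≤ ‖z - y‖ + ‖y‖ := by
                  have := norm_add_le (z - y) y; simpa using this
                have z1 := hR (u, z + y) (lt_of_lt_of_le (by linarith : R < ‖z + y‖) (norm_snd_le (u, z + y)))
                have z2 := hR (u, z - y) (lt_of_lt_of_le (by linarith : R < ‖z - y‖) (norm_snd_le (u, z - y)))
                have z3 := hR (u, z) (lt_of_lt_of_le (by linarith : R < ‖z‖) (norm_snd_le (u, z)))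
                simp [D2, z1, z2, z3]
        _ = K * V * min 1 (‖y‖ ^ 2) := by
            rw [integral_indicator Metric.isClosed_closedBall.measurableSet, setIntegral_const, ← hV, smul_eq_mul]; ring
        _ ≤ M * min 1 (‖y‖ ^ 2) := by
            gcongr
            rw [hM]; linarith
  refine ((nu0_int hd hα0 hα2).const_mul M).mono' ?_ (ae_of_all _ fun y => ?_)
  · exact (hDm.norm.stronglyMeasurable.integral_prod_right (ν := volume)).aestronglyMeasurable
  · rw [Real.norm_eq_abs, abs_of_nonneg (integral_nonneg fun z => norm_nonneg _)]
    simp only [norm_mul, Real.norm_eq_abs, abs_of_nonneg (nu0_nonneg hα0 y)]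
    rw [integral_mul_const, ← mul_assoc]
    exact mul_le_mul_of_nonneg_right (hbound y) (nu0_nonneg hα0 y)

lemma Lap_int (hd : 1 ≤ d) {α : ℝ} (hα0 : 0 < α) (hα2 : α < 2) {φ : ℝ × E → ℝ} (hφ : ContDiff ℝ (⊤ : ℕ∞) φ) (hφc : HasCompactSupport φ) (u : ℝ) :
    Integrable (fun z => Lap α φ u z) :=
  ((D2_prod hd hα0 hα2 hφ hφc u).integral_prod_right).const_mul _

lemma Lap_cos (hd : 1 ≤ d) {α : ℝ} (hα0 : 0 < α) (hα2 : α < 2) {φ : ℝ × E → ℝ} (hφ : ContDiff ℝ (⊤ : ℕ∞) φ) (hφc : HasCompactSupport φ)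
    (x : E) (u : ℝ) (ξ : E) :
    ∫ z, Lap α φ u z * Real.cos ⟪z - x, ξ⟫ = -(‖ξ‖ ^ α * Ct φ x u ξ) := by
  let G : E → E → ℝ := fun y z => (D2 φ u z y * nu0 α y) * Real.cos ⟪z - x, ξ⟫
  have hG : Integrable (Function.uncurry G) (volume.prod volume) := by
    refine (D2_prod hd hα0 hα2 hφ hφc u).mul_bdd (c := 1) (g := fun p : E × E => Real.cos ⟪p.2 - x, ξ⟫) (Continuous.aestronglyMeasurable (by fun_prop)) (ae_of_all _ fun v => ?_)
    simpa using Real.abs_cos_le_one _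
  have hsw := integral_integral_swap hG
  have e1 : ∀ z, Lap α φ u z * Real.cos ⟪z - x, ξ⟫ = (1 / 2) * ∫ y, G y z := by
    intro z
    simp only [G, Lap]
    rw [integral_mul_const]; ring
  have e2 : ∀ y, ∫ z, G y z = (-2 * Ct φ x u ξ) * ((1 - Real.cos ⟪ξ, y⟫) * nu0 α y) := by
    intro y
    simp only [G]
    have : ∀ z, D2 φ u z y * nu0 α y * Real.cos ⟪z - x, ξ⟫ = nu0 α y * (D2 φ u z y * Real.cos ⟪z - x, ξ⟫) := fun z => by ring
    simp_rw [this]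
    rw [integral_const_mul, D2_cos hφ.continuous hφc]; ring
  simp_rw [e1]
  rw [integral_const_mul, ← hsw]
  simp_rw [e2]
  rw [integral_const_mul]
  have := symbol_d hα0 hα2 ξ
  simp only [nu0]
  rw [this]; ring

end F

section G
variable {d : ℕ}

local notation "E" => EuclideanSpace ℝ (Fin d)

noncomputable def gg (α : ℝ) (φ : ℝ × EuclideanSpace ℝ (Fin d) → ℝ) (u : ℝ) (z : EuclideanSpace ℝ (Fin d)) : ℝ :=
  dT φ (u, z) + Lap α φ u z

lemma gg_bd (hd : 1 ≤ d) {α : ℝ} (hα0 : 0 < α) (hα2 : α < 2) {φ : ℝ × E → ℝ} (hφ : ContDiff ℝ (⊤ : ℕ∞) φ) (hφc : HasCompactSupport φ) :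
    ∃ K : ℝ, 0 ≤ K ∧ ∀ u z, |gg α φ u z| ≤ K := by
  obtain ⟨K1, h10, h1⟩ := bdd_K (dT_smooth hφ).continuous (dT_supp hφc)
  obtain ⟨K2, h2⟩ := Lap_bd hd hα0 hα2 hφ hφc
  have : 0 ≤ K2 := (abs_nonneg _).trans (h2 0 0)
  refine ⟨K1 + K2, by positivity, fun u z => (abs_add_le _ _).trans (add_le_add (h1 (u, z)) (h2 u z))⟩

lemma supp_both {φ : ℝ × E → ℝ} (hφc : HasCompactSupport φ) :
    ∃ R : ℝ, 0 < R ∧ ∀ u, R < |u| → ∀ z, φ (u, z) = 0 ∧ dT φ (u, z) = 0 := by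
  obtain ⟨R1, hR1, h1⟩ := supp_R hφc
  obtain ⟨R2, hR2, h2⟩ := supp_R (dT_supp hφc)
  refine ⟨max R1 R2, by positivity, fun u hu z => ⟨h1 _ ?_, h2 _ ?_⟩⟩
  · exact ((le_max_left _ _).trans_lt hu).trans_le (norm_fst_le (u, z))
  · exact ((le_max_right _ _).trans_lt hu).trans_le (norm_fst_le (u, z))

lemma gg_zero {α R u : ℝ} {φ : ℝ × E → ℝ} (h : ∀ u, R < |u| → ∀ z, φ (u, z) = 0 ∧ dT φ (u, z) = 0) (hu : R < |u|) (z : E) :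
    gg α φ u z = 0 := by
  simp [gg, Lap, D2, fun z => (h u hu z).1, (h u hu z).2]

lemma Ct_zero {R u : ℝ} {φ : ℝ × E → ℝ} (h : ∀ u, R < |u| → ∀ z, φ (u, z) = 0 ∧ dT φ (u, z) = 0) (hu : R < |u|) (x ξ : E) :
    Ct φ x u ξ = 0 ∧ Ct (dT φ) x u ξ = 0 := by
  simp [Ct, fun z => (h u hu z).1, fun z => (h u hu z).2]

lemma gg_meas {α : ℝ} {φ : ℝ × E → ℝ} (hφ : ContDiff ℝ (⊤ : ℕ∞) φ) : Measurable (fun p : ℝ × E => gg α φ p.1 p.2) :=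
  ((dT_smooth hφ).continuous.measurable).add (Lap_meas hφ.continuous)

lemma ind_int (s R K : ℝ) : Integrable ((Set.Icc (-R) R).indicator (fun _ : ℝ => K)) (volume.restrict (Set.Ioi s)) := by
  refine Integrable.restrict ?_
  rw [integrable_indicator_iff measurableSet_Icc]
  exact integrableOn_const (by simp)

lemma main_int (hd : 1 ≤ d) {α : ℝ} (hα0 : 0 < α) (hα2 : α < 2) {φ : ℝ × E → ℝ} (hφ : ContDiff ℝ (⊤ : ℕ∞) φ) (hφc : HasCompactSupport φ)
    (s : ℝ) (x : E) :
    Integrable (fun p : ℝ × E => qk α (p.1 - s) (p.2 - x) * gg α φ p.1 p.2) ((volume.restrict (Set.Ioi s)).prod volume) := by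
  obtain ⟨K, hK0, hK⟩ := gg_bd hd hα0 hα2 hφ hφc
  obtain ⟨R, hR0, hR⟩ := supp_both hφc
  have hm : Measurable (fun p : ℝ × E => qk α (p.1 - s) (p.2 - x) * gg α φ p.1 p.2) := by
    refine Measurable.mul ?_ (gg_meas hφ)
    have h2 : Measurable (fun p : ℝ × E => (p.1 - s, p.2 - x)) := by fun_prop
    exact (qk_meas α).comp h2
  have hq : ∀ u, s < u → Integrable (fun z : E => qk α (u - s) (z - x)) := fun u hu =>
    (qk_mass hd hα0 hα2 (sub_pos.2 hu)).1.comp_sub_right x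
  have hin : ∀ u, s < u → Integrable (fun z : E => qk α (u - s) (z - x) * gg α φ u z) := fun u hu => by
    refine (hq u hu).mul_bdd (c := K) ?_ (ae_of_all _ fun z => hK u z)
    have h2 : Measurable (fun z : E => (u, z)) := by fun_prop
    exact ((gg_meas hφ).comp h2).aestronglyMeasurable
  rw [integrable_prod_iff hm.aestronglyMeasurable]
  constructor
  · exact (ae_restrict_iff' measurableSet_Ioi).2 (ae_of_all _ fun u hu => hin u hu)
  · refine (ind_int s R ((2 * π) ^ (d : ℝ) * K)).mono' ?_ ?_
    · exact (hm.norm.stronglyMeasurable.integral_prod_right (ν := volume)).aestronglyMeasurable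
    · refine (ae_restrict_iff' measurableSet_Ioi).2 (ae_of_all _ fun u hu => ?_)
      rw [Real.norm_eq_abs, abs_of_nonneg (integral_nonneg fun z => norm_nonneg _)]
      by_cases huR : u ∈ Set.Icc (-R) R
      · rw [Set.indicator_of_mem huR]
        calc ∫ z, ‖qk α (u - s) (z - x) * gg α φ u z‖ ≤ ∫ z, qk α (u - s) (z - x) * K := by
              refine integral_mono (hin u hu).norm ((hq u hu).mul_const K) fun z => ?_
              simp only [norm_mul, Real.norm_eq_abs]
              rw [abs_of_nonneg (qk_nonneg hd hα0 hα2 (sub_pos.2 hu) _)]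
              exact mul_le_mul_of_nonneg_left (hK u z) (qk_nonneg hd hα0 hα2 (sub_pos.2 hu) _)
          _ = (∫ z, qk α (u - s) z) * K := by
              rw [integral_mul_const, integral_sub_right_eq_self (fun z => qk α (u - s) z) x]
          _ ≤ _ := mul_le_mul_of_nonneg_right (qk_mass hd hα0 hα2 (sub_pos.2 hu)).2 hK0
      · have hu' : R < |u| := by
          by_contra h
          exact huR (abs_le.1 (not_lt.1 h))
        simp [Set.indicator_of_notMem huR, gg_zero hR hu']

lemma inner_val (hd : 1 ≤ d) {α : ℝ} (hα0 : 0 < α) (hα2 : α < 2) {φ : ℝ × E → ℝ} (hφ : ContDiff ℝ (⊤ : ℕ∞) φ) (hφc : HasCompactSupport φ)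
    (s : ℝ) (x : E) (u : ℝ) (hu : s < u) :
    ∫ z, qk α (u - s) (z - x) * gg α φ u z = ∫ ξ : E, rexp (-((u - s) * ‖ξ‖ ^ α)) * (Ct (dT φ) x u ξ - ‖ξ‖ ^ α * Ct φ x u ξ) := by
  have i1 := slice_int (dT_smooth hφ).continuous (dT_supp hφc) u
  have i2 := Lap_int hd hα0 hα2 hφ hφc u
  have hg : Integrable (fun z => gg α φ u z) := i1.add i2
  rw [qk_fubini hd hα0 (sub_pos.2 hu) hg x]
  refine integral_congr_ae (ae_of_all _ fun ξ => ?_)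
  simp only
  congr 1
  have hb : ∀ {f : E → ℝ}, Integrable f → Integrable (fun z => f z * Real.cos ⟪z - x, ξ⟫) := by
    intro f hf
    refine hf.mul_bdd (c := 1) (Continuous.aestronglyMeasurable (by fun_prop)) (ae_of_all _ fun v => ?_)
    simpa using Real.abs_cos_le_one _
  simp only [gg, add_mul]
  rw [integral_add (hb i1) (hb i2), Lap_cos hd hα0 hα2 hφ hφc, ← sub_eq_add_neg]
  rfl

lemma main_val (hd : 1 ≤ d) {α : ℝ} (hα0 : 0 < α) (hα2 : α < 2) {φ : ℝ × E → ℝ} (hφ : ContDiff ℝ (⊤ : ℕ∞) φ) (hφc : HasCompactSupport φ)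
    (s : ℝ) (x : E) :
    ∫ u in Set.Ioi s, ∫ z, qk α (u - s) (z - x) * gg α φ u z = -((2 * π) ^ (d : ℝ) * φ (s, x)) := by
  rw [setIntegral_congr_fun measurableSet_Ioi (fun u hu => inner_val hd hα0 hα2 hφ hφc s x u hu)]
  obtain ⟨R, hR0, hR⟩ := supp_both hφc
  obtain ⟨K1, h10, h1⟩ := Ct_dec hφ hφc (d + 3)
  obtain ⟨K2, h20, h2⟩ := Ct_dec (dT_smooth hφ) (dT_supp hφc) (d + 1)
  let H : ℝ → E → ℝ := fun u ξ => rexp (-((u - s) * ‖ξ‖ ^ α)) * (Ct (dT φ) x u ξ - ‖ξ‖ ^ α * Ct φ x u ξ)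
  have hbd : ∀ u, s < u → ∀ ξ, |H u ξ| ≤ (Set.Icc (-R) R).indicator (fun _ => 1) u * ((K1 + K2) * (1 + ‖ξ‖) ^ (-((d + 1 : ℕ) : ℝ))) := by
    intro u hu ξ
    by_cases huR : u ∈ Set.Icc (-R) R
    · rw [Set.indicator_of_mem huR, one_mul]
      simp only [H]
      rw [abs_mul, abs_of_pos (Real.exp_pos _)]
      have hp : 0 ≤ ‖ξ‖ ^ α := by positivity
      have hpos : (0 : ℝ) < 1 + ‖ξ‖ := by positivity
      refine (mul_le_of_le_one_left (abs_nonneg _) (Real.exp_le_one_iff.2 ?_)).trans ?_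
      · have := mul_nonneg (sub_pos.2 hu).le hp; linarith
      · have hα : ‖ξ‖ ^ α ≤ (1 + ‖ξ‖) ^ (2 : ℝ) := by
          calc ‖ξ‖ ^ α ≤ (1 + ‖ξ‖) ^ α := by gcongr; linarith
            _ ≤ _ := Real.rpow_le_rpow_of_exponent_le (by linarith [norm_nonneg ξ]) hα2.le
        have e : (1 + ‖ξ‖) ^ (2 : ℝ) * (1 + ‖ξ‖) ^ (-((d + 3 : ℕ) : ℝ)) = (1 + ‖ξ‖) ^ (-((d + 1 : ℕ) : ℝ)) := by
          rw [← Real.rpow_add hpos]; congr 1; push_cast; ring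
        refine (abs_sub _ _).trans ?_
        rw [abs_mul, abs_of_nonneg hp]
        calc _ ≤ K2 * (1 + ‖ξ‖) ^ (-((d + 1 : ℕ) : ℝ)) + (1 + ‖ξ‖) ^ (2 : ℝ) * (K1 * (1 + ‖ξ‖) ^ (-((d + 3 : ℕ) : ℝ))) := by
              gcongr
              · exact h2 x u ξ
              · exact h1 x u ξ
          _ = K2 * (1 + ‖ξ‖) ^ (-((d + 1 : ℕ) : ℝ)) + K1 * ((1 + ‖ξ‖) ^ (2 : ℝ) * (1 + ‖ξ‖) ^ (-((d + 3 : ℕ) : ℝ))) := by ring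
          _ = _ := by rw [e]; ring
    · have hu' : R < |u| := by
        by_contra h
        exact huR (abs_le.1 (not_lt.1 h))
      simp [H, Set.indicator_of_notMem huR, Ct_zero hR hu']
  have hm : Measurable (Function.uncurry H) := by
    simp only [Function.uncurry_def, H]
    have m1 := Ct_meas (dT_smooth hφ).continuous x
    have m2 := Ct_meas hφ.continuous x
    fun_prop
  have hH : Integrable (Function.uncurry H) ((volume.restrict (Set.Ioi s)).prod volume) := by
    refine ((ind_int s R 1).mul_prod ((one_add_int (d := d) (d + 1) (by omega)).const_mul (K1 + K2))).mono' hm.aestronglyMeasurable ?_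
    have : (volume.restrict (Set.Ioi s)).prod (volume : Measure E) = (volume.prod volume).restrict (Set.Ioi s ×ˢ Set.univ) := by
      rw [← Measure.prod_restrict, Measure.restrict_univ]
    rw [this]
    refine (ae_restrict_iff' (measurableSet_Ioi.prod MeasurableSet.univ)).2 (ae_of_all _ fun p hp => ?_)
    exact hbd p.1 hp.1 p.2
  change ∫ u in Set.Ioi s, ∫ ξ, H u ξ = _
  rw [integral_integral_swap hH]
  have hH2 : ∀ᵐ ξ : E, Integrable (fun u => H u ξ) (volume.restrict (Set.Ioi s)) := hH.prod_left_ae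
  have : ∀ᵐ ξ : E, ∫ u in Set.Ioi s, H u ξ = - Ct φ x s ξ := by
    filter_upwards [hH2] with ξ hξ
    have hder : ∀ u, HasDerivAt (fun u => rexp (-((u - s) * ‖ξ‖ ^ α)) * Ct φ x u ξ) (H u ξ) u := by
      intro u
      have a1 : HasDerivAt (fun u : ℝ => rexp (-((u - s) * ‖ξ‖ ^ α))) (rexp (-((u - s) * ‖ξ‖ ^ α)) * -(1 * ‖ξ‖ ^ α)) u :=
        ((((hasDerivAt_id u).sub_const s).mul_const (‖ξ‖ ^ α)).neg).exp
      convert! a1.mul (Ct_deriv hφ hφc x u ξ) using 1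
      simp only [H]; ring
    have hlim : Tendsto (fun u => rexp (-((u - s) * ‖ξ‖ ^ α)) * Ct φ x u ξ) atTop (𝓝 0) := by
      refine tendsto_const_nhds.congr' ?_
      filter_upwards [eventually_gt_atTop R] with u hu
      rw [(Ct_zero hR (hu.trans_le (le_abs_self u)) x ξ).1, mul_zero]
    have := integral_Ioi_of_hasDerivAt_of_tendsto (hder s).continuousAt.continuousWithinAt (fun u _ => hder u) hξ hlim
    rw [this]; simp
  rw [integral_congr_ae this, integral_neg, Ct_inv hφ hφc]

end G

/-- For smooth compactly supported `φ : ℝ × ℝ^d → ℝ`, every `s ∈ ℝ` and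
`x ∈ ℝ^d`, `∫_s^∞ ∫_{ℝ^d} p_{u−s}(z−x) (∂_u φ(u,z) + Δ_z^{α/2}φ(u,z)) dz du = −φ(s,x)`,
where `Δ_z^{α/2}φ(u,z)` is the principal-value fractional Laplacian in the space variable,
and the iterated integral converges absolutely. -/
theorem stmt_10 (d : ℕ) (hd : 1 ≤ d) (α : ℝ) (hα0 : 0 < α) (hα2 : α < 2)
    (ν : EuclideanSpace ℝ (Fin d) → ℝ)
    (hν : ∀ y : EuclideanSpace ℝ (Fin d), y ≠ 0 →
      ν y = (2 : ℝ) ^ α * Real.Gamma (((d : ℝ) + α) / 2) /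
        (Real.pi ^ ((d : ℝ) / 2) * |Real.Gamma (-α / 2)|) * ‖y‖ ^ (-((d : ℝ) + α)))
    (p : ℝ → EuclideanSpace ℝ (Fin d) → ℝ)
    (hp : ∀ t : ℝ, 0 < t → ∀ x : EuclideanSpace ℝ (Fin d),
      p t x = (2 * Real.pi) ^ (-(d : ℝ)) *
        ∫ ξ : EuclideanSpace ℝ (Fin d), Real.exp (-(t * ‖ξ‖ ^ α)) * Real.cos ⟪x, ξ⟫)
    (φ : ℝ × EuclideanSpace ℝ (Fin d) → ℝ)
    (hφ : ContDiff ℝ (⊤ : ℕ∞) φ) (hφc : HasCompactSupport φ)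
    (Δφ : ℝ → EuclideanSpace ℝ (Fin d) → ℝ)
    (hΔφ : ∀ (u : ℝ) (z : EuclideanSpace ℝ (Fin d)),
      Tendsto
        (fun ε : ℝ => ∫ y in {y : EuclideanSpace ℝ (Fin d) | ε < ‖y‖},
          (φ (u, z + y) - φ (u, z)) * ν y)
        (𝓝[>] (0 : ℝ)) (𝓝 (Δφ u z))) :
    ∀ (s : ℝ) (x : EuclideanSpace ℝ (Fin d)),
      IntegrableOn
        (fun uz : ℝ × EuclideanSpace ℝ (Fin d) =>
          p (uz.1 - s) (uz.2 - x) * (deriv (fun v : ℝ => φ (v, uz.2)) uz.1 + Δφ uz.1 uz.2))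
        (Set.Ioi s ×ˢ (Set.univ : Set (EuclideanSpace ℝ (Fin d)))) ∧
      ∫ u in Set.Ioi s, ∫ z : EuclideanSpace ℝ (Fin d),
          p (u - s) (z - x) * (deriv (fun v : ℝ => φ (v, z)) u + Δφ u z)
        = -φ (s, x) := by
  intro s x
  have key : ∀ u, s < u → ∀ z, p (u - s) (z - x) * (deriv (fun v : ℝ => φ (v, z)) u + Δφ u z)
      = (2 * Real.pi) ^ (-(d : ℝ)) * (qk α (u - s) (z - x) * gg α φ u z) := by
    intro u hu z
    rw [hp _ (sub_pos.2 hu), (dT_has hφ u z).deriv,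
      Lap_eq hd hα0 hα2 hφ hφc ν (fun y hy => hν y hy) u z _ (hΔφ u z), qk, gg, mul_assoc]
  constructor
  · have h := (main_int hd hα0 hα2 hφ hφc s x).const_mul ((2 * Real.pi) ^ (-(d : ℝ)))
    have e : (volume.restrict (Set.Ioi s)).prod (volume : Measure (EuclideanSpace ℝ (Fin d))) = (volume.prod volume).restrict (Set.Ioi s ×ˢ Set.univ) := by
      rw [← Measure.prod_restrict, Measure.restrict_univ]
    rw [e, ← Measure.volume_eq_prod] at h
    refine IntegrableOn.congr_fun h (fun q hq => ?_) (measurableSet_Ioi.prod MeasurableSet.univ)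
    exact (key q.1 hq.1 q.2).symm
  · have e : ∀ u ∈ Set.Ioi s, (∫ z : EuclideanSpace ℝ (Fin d),
          p (u - s) (z - x) * (deriv (fun v : ℝ => φ (v, z)) u + Δφ u z))
          = (2 * Real.pi) ^ (-(d : ℝ)) * ∫ z, qk α (u - s) (z - x) * gg α φ u z := by
      intro u hu
      rw [← integral_const_mul]
      exact integral_congr_ae (ae_of_all _ fun z => key u hu z)
    rw [setIntegral_congr_fun measurableSet_Ioi e, integral_const_mul, main_val hd hα0 hα2 hφ hφc s x, mul_neg, ← mul_assoc,
      ← Real.rpow_add (by positivity)]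
    simp
end

section
/- There is a constant C = C(d, α) ∈ (0, ∞) such that for every x ∈ ℝ^d with |x| < 1 and every R ≥ 2, C^{−1} (1 − |x|)^{α/2} R^{−α} ≤ ∫_{{y : |y| ≥ R}} 𝒞(d,α) ((1 − |x|²)/(|y|² − 1))^{α/2} |x − y|^{−d} dy ≤ C (1 − |x|)^{α/2} R^{−α}. -/
open MeasureTheory Real Filter
open scoped RealInnerProductSpace Topology

lemma aux_radial (d : ℕ) (hd : 1 ≤ d) (α : ℝ) (hα0 : 0 < α) (R : ℝ) (hR : 0 < R) :
    IntegrableOn (fun y : EuclideanSpace ℝ (Fin d) => ‖y‖ ^ (-α - (d : ℝ)))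
      {y : EuclideanSpace ℝ (Fin d) | R ≤ ‖y‖} ∧
    ∫ y in {y : EuclideanSpace ℝ (Fin d) | R ≤ ‖y‖}, ‖y‖ ^ (-α - (d : ℝ)) =
      ((d : ℝ) * (volume : Measure (EuclideanSpace ℝ (Fin d))).real (Metric.ball 0 1) / α)
        * R ^ (-α) := by
  have : Nonempty (Fin d) := ⟨⟨0, hd⟩⟩
  have hms : MeasurableSet {y : EuclideanSpace ℝ (Fin d) | R ≤ ‖y‖} :=
    measurableSet_le measurable_const measurable_norm
  let f : ℝ → ℝ := (Set.Ici R).indicator (fun t => t ^ (-α - (d : ℝ)))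
  have hf : ({y : EuclideanSpace ℝ (Fin d) | R ≤ ‖y‖}).indicator
      (fun y => ‖y‖ ^ (-α - (d : ℝ))) = fun y => f ‖y‖ := by
    ext y
    simp [f, Set.indicator]
  have hg : (fun t : ℝ => t ^ (d - 1) • f t) =
      (Set.Ici R).indicator (fun t => t ^ (-α - 1)) := by
    ext t
    by_cases ht : t ∈ Set.Ici R
    · have ht0 : 0 < t := lt_of_lt_of_le hR ht
      simp only [f, Set.indicator_of_mem ht, smul_eq_mul]
      rw [← Real.rpow_natCast, ← Real.rpow_add ht0]
      congr 1
      push_cast [Nat.cast_sub hd]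
      ring
    · simp [f, Set.indicator_of_notMem ht]
  have hsub : Set.Ici R ∩ Set.Ioi 0 = Set.Ici R := by
    apply Set.inter_eq_left.2
    intro t ht
    exact lt_of_lt_of_le hR ht
  constructor
  · rw [← integrable_indicator_iff hms, hf, integrable_fun_norm_addHaar]
    simp only [finrank_euclideanSpace, Fintype.card_fin]
    rw [hg, IntegrableOn, integrable_indicator_iff measurableSet_Ici, IntegrableOn,
      Measure.restrict_restrict measurableSet_Ici, hsub]
    exact (integrableOn_Ici_iff_integrableOn_Ioi (by simp)).2 (integrableOn_Ioi_rpow_of_lt (by linarith) hR)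
  · rw [← integral_indicator hms, hf, integral_fun_norm_addHaar]
    simp only [finrank_euclideanSpace, Fintype.card_fin]
    rw [hg, integral_indicator measurableSet_Ici,
      Measure.restrict_restrict measurableSet_Ici, hsub, integral_Ici_eq_integral_Ioi,
      integral_Ioi_rpow_of_lt (by linarith) hR]
    simp only [nsmul_eq_mul, smul_eq_mul]
    rw [show -α - 1 + 1 = -α by ring]
    field_simp

lemma aux_quot (α : ℝ) (hα0 : 0 < α) (hα2 : α < 2) (s r : ℝ) (hs0 : 0 ≤ s) (hs : s < 1)
    (hr : 2 ≤ r) :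
    (1 - s) ^ (α / 2) * r ^ (-α) ≤ ((1 - s ^ 2) / (r ^ 2 - 1)) ^ (α / 2) ∧
    ((1 - s ^ 2) / (r ^ 2 - 1)) ^ (α / 2) ≤ 4 * ((1 - s) ^ (α / 2) * r ^ (-α)) := by
  have hr0 : 0 < r := by linarith
  have hr2 : 0 < r ^ 2 - 1 := by nlinarith
  have h1 : (1 - s) ^ (α / 2) * r ^ (-α) = ((1 - s) / r ^ 2) ^ (α / 2) := by
    rw [Real.div_rpow (by linarith) (by positivity), ← Real.rpow_natCast r 2,
      ← Real.rpow_mul hr0.le, Real.rpow_neg hr0.le]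
    rw [show ((2 : ℕ) : ℝ) * (α / 2) = α by push_cast; ring]
    rfl
  have hq : 0 ≤ (1 - s) / r ^ 2 := div_nonneg (by linarith) (by positivity)
  rw [h1]
  constructor
  · apply Real.rpow_le_rpow hq _ (by linarith)
    apply div_le_div₀ <;> nlinarith
  · calc _ ≤ (4 * ((1 - s) / r ^ 2)) ^ (α / 2) := by
          apply Real.rpow_le_rpow (div_nonneg (by nlinarith) hr2.le) _ (by linarith)
          rw [div_le_iff₀ hr2]
          have : 4 * ((1 - s) / r ^ 2) * (r ^ 2 - 1) = (1 - s) * (4 - 4 / r ^ 2) := by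
            field_simp
          rw [this, show 1 - s ^ 2 = (1 - s) * (1 + s) by ring]
          apply mul_le_mul_of_nonneg_left _ (by linarith)
          have : 4 / r ^ 2 ≤ 1 := by
            rw [div_le_one (by positivity)]; nlinarith
          linarith
      _ = 4 ^ (α / 2) * ((1 - s) / r ^ 2) ^ (α / 2) := Real.mul_rpow (by norm_num) hq
      _ ≤ _ := by
          apply mul_le_mul_of_nonneg_right _ (Real.rpow_nonneg hq _)
          calc (4 : ℝ) ^ (α / 2) ≤ 4 ^ (1 : ℝ) :=
                Real.rpow_le_rpow_of_exponent_le (by norm_num) (by linarith)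
            _ = 4 := Real.rpow_one 4

lemma aux_dist (d : ℕ) (s r t : ℝ) (hs : s < 1) (hr : 2 ≤ r) (h1 : r - s ≤ t) (h2 : t ≤ r + s) :
    2 ^ (-(d : ℝ)) * r ^ (-(d : ℝ)) ≤ t ^ (-(d : ℝ)) ∧
    t ^ (-(d : ℝ)) ≤ 2 ^ (d : ℝ) * r ^ (-(d : ℝ)) := by
  have hr0 : 0 < r := by linarith
  have ht : 0 < t := by linarith
  have hd : -(d : ℝ) ≤ 0 := by simp
  constructor
  · rw [← Real.mul_rpow (by norm_num) hr0.le]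
    exact Real.rpow_le_rpow_of_nonpos ht (by linarith) hd
  · have : (2 : ℝ) ^ (d : ℝ) = (1 / 2) ^ (-(d : ℝ)) := by
      rw [Real.rpow_neg (by norm_num), ← Real.inv_rpow (by norm_num)]; norm_num
    rw [this, ← Real.mul_rpow (by norm_num) hr0.le]
    exact Real.rpow_le_rpow_of_nonpos (by linarith) (by linarith) hd

/-- There is `C = C(d,α) ∈ (0,∞)` such that for `|x| < 1` and `R ≥ 2`,
`∫_{|y| ≥ R} P_{B(0,1)}(x,y) dy ≍ (1−|x|)^{α/2} R^{−α}`, where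
`P_{B(0,1)}(x,y) = 𝒞(d,α) ((1−|x|²)/(|y|²−1))^{α/2} |x−y|^{−d}`. -/
theorem stmt_11 (d : ℕ) (hd : 1 ≤ d) (α : ℝ) (hα0 : 0 < α) (hα2 : α < 2) :
    ∃ C : ℝ, 0 < C ∧
      ∀ x : EuclideanSpace ℝ (Fin d), ‖x‖ < 1 → ∀ R : ℝ, 2 ≤ R →
        C⁻¹ * ((1 - ‖x‖) ^ (α / 2) * R ^ (-α)) ≤
          (∫ y in {y : EuclideanSpace ℝ (Fin d) | R ≤ ‖y‖},
            Real.Gamma ((d : ℝ) / 2) * Real.pi ^ (-1 - (d : ℝ) / 2) * Real.sin (Real.pi * α / 2) *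
              ((1 - ‖x‖ ^ 2) / (‖y‖ ^ 2 - 1)) ^ (α / 2) * ‖x - y‖ ^ (-(d : ℝ))) ∧
        (∫ y in {y : EuclideanSpace ℝ (Fin d) | R ≤ ‖y‖},
            Real.Gamma ((d : ℝ) / 2) * Real.pi ^ (-1 - (d : ℝ) / 2) * Real.sin (Real.pi * α / 2) *
              ((1 - ‖x‖ ^ 2) / (‖y‖ ^ 2 - 1)) ^ (α / 2) * ‖x - y‖ ^ (-(d : ℝ)))
          ≤ C * ((1 - ‖x‖) ^ (α / 2) * R ^ (-α)) := by
  have : Nonempty (Fin d) := ⟨⟨0, hd⟩⟩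
  have hd0 : (0 : ℝ) < d := by exact_mod_cast hd
  set K : ℝ := Real.Gamma ((d : ℝ) / 2) * Real.pi ^ (-1 - (d : ℝ) / 2) *
    Real.sin (Real.pi * α / 2) with hK
  have hK0 : 0 < K := by
    have h1 : 0 < Real.Gamma ((d : ℝ) / 2) := Real.Gamma_pos_of_pos (by positivity)
    have h2 : 0 < Real.sin (Real.pi * α / 2) := by
      apply Real.sin_pos_of_pos_of_lt_pi
      · have := Real.pi_pos; positivity
      · nlinarith [Real.pi_pos]
    have h3 : 0 < Real.pi ^ (-1 - (d : ℝ) / 2) := Real.rpow_pos_of_pos Real.pi_pos _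
    positivity
  set V : ℝ := (d : ℝ) * (volume : Measure (EuclideanSpace ℝ (Fin d))).real (Metric.ball 0 1) / α
    with hV
  have hV0 : 0 < V := by
    have : 0 < (volume : Measure (EuclideanSpace ℝ (Fin d))).real (Metric.ball 0 1) :=
      ENNReal.toReal_pos (Metric.measure_ball_pos _ _ one_pos).ne' measure_ball_lt_top.ne
    positivity
  set a : ℝ := K * 2 ^ (-(d : ℝ)) with ha
  set b : ℝ := K * 4 * 2 ^ (d : ℝ) with hb
  have ha0 : 0 < a := by positivity
  have hb0 : 0 < b := by positivity
  refine ⟨b * V + (a * V)⁻¹, by positivity, ?_⟩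
  intro x hx R hR
  have hR0 : 0 < R := by linarith
  obtain ⟨hint, hval⟩ := aux_radial d hd α hα0 R hR0
  rw [← hV] at hval
  have hms : MeasurableSet {y : EuclideanSpace ℝ (Fin d) | R ≤ ‖y‖} :=
    measurableSet_le measurable_const measurable_norm
  set A : ℝ := (1 - ‖x‖) ^ (α / 2) with hA
  have hA0 : 0 < A := Real.rpow_pos_of_pos (by linarith) _
  have hRα : 0 < R ^ (-α) := Real.rpow_pos_of_pos hR0 _
  have key : ∀ y ∈ {y : EuclideanSpace ℝ (Fin d) | R ≤ ‖y‖},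
      a * A * ‖y‖ ^ (-α - (d : ℝ)) ≤
        K * ((1 - ‖x‖ ^ 2) / (‖y‖ ^ 2 - 1)) ^ (α / 2) * ‖x - y‖ ^ (-(d : ℝ)) ∧
      K * ((1 - ‖x‖ ^ 2) / (‖y‖ ^ 2 - 1)) ^ (α / 2) * ‖x - y‖ ^ (-(d : ℝ)) ≤
        b * A * ‖y‖ ^ (-α - (d : ℝ)) := by
    intro y hy
    have hy2 : 2 ≤ ‖y‖ := le_trans hR hy
    have hy0 : 0 < ‖y‖ := by linarith
    obtain ⟨q1, q2⟩ := aux_quot α hα0 hα2 ‖x‖ ‖y‖ (norm_nonneg _) hx hy2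
    obtain ⟨e1, e2⟩ := aux_dist d ‖x‖ ‖y‖ ‖x - y‖ hx hy2
      (by rw [norm_sub_rev]; exact norm_sub_norm_le y x)
      (by rw [add_comm]; exact norm_sub_le x y)
    rw [← hA] at q1 q2
    have hsp : ‖y‖ ^ (-α - (d : ℝ)) = ‖y‖ ^ (-α) * ‖y‖ ^ (-(d : ℝ)) := by
      rw [← Real.rpow_add hy0]; rfl
    have p1 : 0 < ‖y‖ ^ (-α) := Real.rpow_pos_of_pos hy0 _
    have p2 : 0 < ‖y‖ ^ (-(d : ℝ)) := Real.rpow_pos_of_pos hy0 _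
    have q0 : 0 ≤ ((1 - ‖x‖ ^ 2) / (‖y‖ ^ 2 - 1)) ^ (α / 2) := le_trans (by positivity) q1
    have e0 : 0 ≤ ‖x - y‖ ^ (-(d : ℝ)) := le_trans (by positivity) e1
    have m1 := mul_le_mul_of_nonneg_left (mul_le_mul q1 e1 (by positivity) q0) hK0.le
    have m2 := mul_le_mul_of_nonneg_left (mul_le_mul q2 e2 e0 (by positivity)) hK0.le
    rw [hsp, ha, hb]
    constructor
    · refine le_trans (le_of_eq ?_) (le_trans m1 (le_of_eq ?_)) <;> ring
    · refine le_trans (le_of_eq ?_) (le_trans m2 (le_of_eq ?_)) <;> ring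
  have hF : IntegrableOn (fun y : EuclideanSpace ℝ (Fin d) =>
      K * ((1 - ‖x‖ ^ 2) / (‖y‖ ^ 2 - 1)) ^ (α / 2) * ‖x - y‖ ^ (-(d : ℝ)))
      {y : EuclideanSpace ℝ (Fin d) | R ≤ ‖y‖} := by
    refine Integrable.mono' (hint.const_mul (b * A)) ?_ ?_
    · apply Measurable.aestronglyMeasurable
      fun_prop
    · refine ae_restrict_of_forall_mem hms fun y hy => ?_
      rw [Real.norm_eq_abs, abs_of_nonneg]
      · exact (key y hy).2
      · exact le_trans (by positivity) (key y hy).1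
  have hlo := setIntegral_mono_on (hint.const_mul (a * A)) hF hms fun y hy => (key y hy).1
  have hhi := setIntegral_mono_on hF (hint.const_mul (b * A)) hms fun y hy => (key y hy).2
  rw [integral_const_mul, hval] at hlo hhi
  constructor
  · refine le_trans ?_ hlo
    have : (b * V + (a * V)⁻¹)⁻¹ ≤ a * V := by
      apply inv_le_of_inv_le₀ (by positivity)
      have : 0 < b * V := by positivity
      linarith
    calc _ ≤ a * V * (A * R ^ (-α)) := mul_le_mul_of_nonneg_right this (by positivity)
      _ = _ := by ring
  · refine le_trans hhi ?_
    have : 0 < (a * V)⁻¹ * (A * R ^ (-α)) := by positivity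
    nlinarith
end

section
/- Let D ⊆ ℝ^d be open, nonempty, with D ≠ ℝ^d, and suppose D is of class C^{1,1} at scale r > 0, i.e., for every Q in the topological boundary of D there exist points x', x'' ∈ ℝ^d with |x' − Q| = |x'' − Q| = r, B(x', r) ⊆ D and B(x'', r) ⊆ ℝ^d \ D. Then D is (1/2, p)-fat for every p ∈ (0, r]: for every x ∈ D and every p ∈ (0, r] there exists A ∈ ℝ^d with the open ball B(A, p/2) contained in D ∩ B(x, p). -/
theorem aux_opp {E : Type*} [NormedAddCommGroup E] [InnerProductSpace ℝ E] (a b : E) (s t : ℝ)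
    (hs : 0 ≤ s) (ht : 0 ≤ t) (ha : ‖a‖ = s) (hb : ‖b‖ = t) (h : s + t ≤ ‖a - b‖) :
    t • a = -(s • b) := by
  have h1 := norm_sub_sq_real a b
  have h2 := norm_add_sq_real (t • a) (s • b)
  rw [norm_smul, norm_smul, real_inner_smul_left, real_inner_smul_right, ha, hb,
    Real.norm_of_nonneg hs, Real.norm_of_nonneg ht] at h2
  rw [ha, hb] at h1
  have h3 : (s + t) ^ 2 ≤ ‖a - b‖ ^ 2 := by gcongr
  have h4 : inner ℝ a b ≤ -(s * t) := by nlinarith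
  have h5 : (t * s) * inner ℝ a b ≤ (t * s) * -(s * t) := by gcongr
  have h6 : ‖t • a + s • b‖ ^ 2 ≤ 0 := by nlinarith
  have h7 : ‖t • a + s • b‖ = 0 := by
    have := sq_nonneg ‖t • a + s • b‖
    exact pow_eq_zero_iff (two_ne_zero) |>.1 (le_antisymm h6 this)
  exact eq_neg_of_add_eq_zero_left (norm_eq_zero.1 h7)

/-- A `C^{1,1}` open set at scale `r` (inner and outer tangent balls of
radius `r` at every boundary point) is `(1/2, p)`-fat for every `p ∈ (0, r]`. -/
theorem stmt_15 (d : ℕ) (hd : 1 ≤ d) (D : Set (EuclideanSpace ℝ (Fin d)))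
    (hDo : IsOpen D) (hDne : D.Nonempty) (hDuniv : D ≠ Set.univ)
    (r : ℝ) (hr : 0 < r)
    (hC11 : ∀ Q ∈ frontier D, ∃ x' x'' : EuclideanSpace ℝ (Fin d),
      ‖x' - Q‖ = r ∧ ‖x'' - Q‖ = r ∧ Metric.ball x' r ⊆ D ∧ Metric.ball x'' r ⊆ Dᶜ) :
    ∀ x ∈ D, ∀ p : ℝ, 0 < p → p ≤ r →
      ∃ A : EuclideanSpace ℝ (Fin d),
        Metric.ball A (p / 2) ⊆ D ∩ Metric.ball x p := by
  intro x hx p hp hpr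
  have hne : (Dᶜ).Nonempty := Set.nonempty_compl.2 hDuniv
  obtain ⟨Q, hQ, hdist⟩ := hDo.isClosed_compl.exists_infDist_eq_dist hne x
  have hball : Metric.ball x (dist x Q) ⊆ D := by
    intro y hy
    by_contra hyD
    have h1 := Metric.infDist_le_dist_of_mem (x := x) (show y ∈ Dᶜ from hyD)
    rw [Metric.mem_ball, dist_comm] at hy
    linarith
  have hδ : 0 < dist x Q := dist_pos.2 (fun h => hQ (h ▸ hx))
  by_cases hc : p / 2 ≤ dist x Q
  · exact ⟨x, Set.subset_inter ((Metric.ball_subset_ball hc).trans hball)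
      (Metric.ball_subset_ball (by linarith))⟩
  push Not at hc
  have hQf : Q ∈ frontier D := by
    rw [frontier, hDo.interior_eq]
    refine ⟨?_, hQ⟩
    refine closure_mono hball ?_
    rw [closure_ball x hδ.ne', Metric.mem_closedBall, dist_comm]
  obtain ⟨x', x'', h1, h2, h3, h4⟩ := hC11 Q hQf
  have e1 : r + r ≤ dist x' x'' := (disjoint_ball_ball_iff hr hr).1
    (Set.disjoint_of_subset h3 h4 disjoint_compl_right)
  have e2 : dist x Q + r ≤ dist x x'' := (disjoint_ball_ball_iff hδ hr).1
    (Set.disjoint_of_subset hball h4 disjoint_compl_right)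
  have f1 := aux_opp (x' - Q) (x'' - Q) r r hr.le hr.le h1 h2
    (by rw [sub_sub_sub_cancel_right, ← dist_eq_norm]; exact e1)
  have f2 := aux_opp (x - Q) (x'' - Q) (dist x Q) r hδ.le hr.le (dist_eq_norm _ _).symm h2
    (by rw [sub_sub_sub_cancel_right, ← dist_eq_norm]; exact e2)
  set δ := dist x Q with hδdef
  have g1 : x'' - Q = -(x' - Q) := by
    rw [← smul_neg] at f1
    rw [smul_right_injective _ hr.ne' f1, neg_neg]
  have g2 : x - Q = (δ / r) • (x' - Q) := by
    rw [g1, smul_neg, neg_neg] at f2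
    rw [div_eq_inv_mul, mul_smul, ← f2, inv_smul_smul₀ hr.ne']
  have g3 : x = Q + (δ / r) • (x' - Q) := by rw [← g2]; abel
  refine ⟨Q + (p / 2 / r) • (x' - Q), Set.subset_inter (Set.Subset.trans ?_ h3) ?_⟩
  · apply Metric.ball_subset_ball'
    have : Q + (p / 2 / r) • (x' - Q) - x' = (p / 2 / r - 1) • (x' - Q) := by module
    rw [dist_eq_norm, this, norm_smul, h1, Real.norm_eq_abs, abs_of_nonpos]
    · field_simp
      linarith
    · rw [sub_nonpos, div_le_one hr]; linarith
  · apply Metric.ball_subset_ball'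
    have : Q + (p / 2 / r) • (x' - Q) - x = (p / 2 / r - δ / r) • (x' - Q) := by
      rw [sub_smul, ← g2]; abel
    rw [dist_eq_norm, this, norm_smul, h1, Real.norm_eq_abs, abs_of_nonneg]
    · field_simp
      linarith
    · rw [sub_nonneg]; gcongr
end
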